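/- There exists a constant C > 0 such that for every L > C, the heat maximal function of f_L = χ_{R_L} − χ_{R₀} satisfies ‖M f_L‖₁ ≤ C log log L. -/

import Mathlib

open MeasureTheory Real Filter Set
open scoped ENNReal

noncomputable section

/-- The group `G = ℝ² ⋊ ℝ⁺`, realized as triples `(x₁, x₂, a)` (only `a > 0` is relevant). -/
abbrev G : Type := ℝ × ℝ × ℝ

/-- Group product `(x₁,x₂,a)·(x₁',x₂',a') = (x₁+a x₁', x₂+a x₂', a a')`. -/
def gMul (x y : G) : G := (x.1 + x.2.2 * y.1, x.2.1 + x.2.2 * y.2.1, x.2.2 * y.2.2)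

/-- Group inverse `(x₁,x₂,a)⁻¹ = (−x₁/a, −x₂/a, 1/a)`. -/
def gInv (x : G) : G := (-x.1 / x.2.2, -x.2.1 / x.2.2, 1 / x.2.2)

/-- The identity `e = (0,0,1)`. -/
def gE : G := (0, 0, 1)

/-- The right Haar measure `dρ = a⁻¹ dx₁ dx₂ da` (supported where `a > 0`). -/
def ρG : Measure G :=
  (volume : Measure G).withDensity fun x => ENNReal.ofReal (if 0 < x.2.2 then x.2.2⁻¹ else 0)

/-- The modular function `δ(x₁,x₂,a) = a⁻²`. -/
def deltaG (x : G) : ℝ := (x.2.2 ^ 2)⁻¹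

/-- `|x| = √(x₁² + x₂²)`. -/
def normG (x : G) : ℝ := Real.sqrt (x.1 ^ 2 + x.2.1 ^ 2)

/-- `cosh r(x) = (a + a⁻¹ + a⁻¹|x|²)/2`. -/
def coshArg (x : G) : ℝ := (x.2.2 + x.2.2⁻¹ + x.2.2⁻¹ * (x.1 ^ 2 + x.2.1 ^ 2)) / 2

/-- `r(x) ≥ 0` is determined by `cosh r(x) = coshArg x`; explicitly `r = arcosh (coshArg x)`. -/
def rG (x : G) : ℝ := Real.log (coshArg x + Real.sqrt (coshArg x ^ 2 - 1))

/-- The left-invariant distance `d(x,y) = r(x⁻¹y)`. -/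
def dG (x y : G) : ℝ := rG (gMul (gInv x) y)

/-- The heat kernel
`p_t(x) = (8π^{3/2})⁻¹ δ(x)^{1/2} (r(x)/sinh r(x)) t^{−3/2} exp(−r(x)²/(4t))`,
with `r/sinh r := 1` at `x = e`. -/
def heatK (t : ℝ) (x : G) : ℝ :=
  (8 * Real.pi ^ ((3 : ℝ)/2))⁻¹ * Real.sqrt (deltaG x) *
    (if rG x = 0 then 1 else rG x / Real.sinh (rG x)) *
    t ^ (-(3 : ℝ)/2) * Real.exp (-(rG x ^ 2) / (4 * t))

/-- Convolution `f ∗ p_t(x) = ∫ f(xy⁻¹) p_t(y) dρ(y)`. -/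
def convHeat (f : G → ℝ) (t : ℝ) (x : G) : ℝ := ∫ y, f (gMul x (gInv y)) * heatK t y ∂ρG

/-- The heat maximal operator `Mf(x) = sup_{t>0} |f ∗ p_t(x)|` (valued in `ℝ≥0∞`). -/
def maxHeat (f : G → ℝ) (x : G) : ℝ≥0∞ :=
  ⨆ (t : ℝ) (_ : 0 < t), ENNReal.ofReal |convHeat f t x|

/-- Calderón–Zygmund sets. -/
def IsCZ (R : Set G) : Prop :=
  ∃ c : G, ∃ L r : ℝ, 0 < c.2.2 ∧ 0 < L ∧ 0 < r ∧
    R = Set.Icc (c.1 - L/2) (c.1 + L/2) ×ˢ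
        (Set.Icc (c.2.1 - L/2) (c.2.1 + L/2) ×ˢ
         Set.Icc (c.2.2 * Real.exp (-r)) (c.2.2 * Real.exp r)) ∧
    (r < 1 → Real.exp 2 * c.2.2 * r ≤ L ∧ L < Real.exp 8 * c.2.2 * r) ∧
    (1 ≤ r → c.2.2 * Real.exp (2*r) ≤ L ∧ L < c.2.2 * Real.exp (8*r))

/-- Atoms: `A ∈ L¹(ρ)` supported in a Calderón–Zygmund set `R`, with
`‖A‖_∞ ≤ ρ(R)⁻¹` and `∫ A dρ = 0`. -/
def IsAtomG (A : G → ℝ) : Prop :=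
  Integrable A ρG ∧
  ∃ R : Set G, IsCZ R ∧ (∀ x ∉ R, A x = 0) ∧
    eLpNorm A ⊤ ρG ≤ (ρG R)⁻¹ ∧
    ∫ x, A x ∂ρG = 0

/-- `f = Σ_j lam_j A_j` with atoms `A_j`, `Σ_j |lam_j| < ∞`, converging in `L¹(ρ)`. -/
def IsH1Decomp (f : G → ℝ) (lam : ℕ → ℝ) (A : ℕ → G → ℝ) : Prop :=
  (∀ j, IsAtomG (A j)) ∧ Summable (fun j => |lam j|) ∧
  Tendsto (fun N => eLpNorm (fun x => f x - ∑ j ∈ Finset.range N, lam j * A j x) 1 ρG)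
    atTop (nhds 0)

/-- The Hardy space `H¹`. -/
def MemH1 (f : G → ℝ) : Prop :=
  Integrable f ρG ∧ ∃ lam A, IsH1Decomp f lam A

/-- `‖f‖_{H¹} = inf Σ_j |lam_j|` over all atomic decompositions. -/
def H1norm (f : G → ℝ) : ℝ :=
  sInf {s | ∃ lam A, IsH1Decomp f lam A ∧ s = ∑' j, |lam j|}

/-- The left-invariant vector field `X₀ = a ∂_a`. -/
def X0 (f : G → ℝ) (x : G) : ℝ := x.2.2 * deriv (fun s => f (x.1, x.2.1, s)) x.2.2

/-- The left-invariant vector field `X₁ = a ∂_{x₁}`. -/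
def X1 (f : G → ℝ) (x : G) : ℝ := x.2.2 * deriv (fun s => f (s, x.2.1, x.2.2)) x.1

/-- The left-invariant vector field `X₂ = a ∂_{x₂}`. -/
def X2 (f : G → ℝ) (x : G) : ℝ := x.2.2 * deriv (fun s => f (x.1, s, x.2.2)) x.2.1

/-- `‖∇p_t(x)‖`, the Euclidean norm of `(X₀p_t, X₁p_t, X₂p_t)` at `x`. -/
def gradHeatNorm (t : ℝ) (x : G) : ℝ :=
  Real.sqrt (X0 (heatK t) x ^ 2 + X1 (heatK t) x ^ 2 + X2 (heatK t) x ^ 2)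

/-- The Poisson kernel `q_t(x) = π⁻² δ(x)^{1/2} (r(x)/sinh r(x)) · t/(t²+r(x)²)²`. -/
def poissonK (t : ℝ) (x : G) : ℝ :=
  (Real.pi ^ 2)⁻¹ * Real.sqrt (deltaG x) *
    (if rG x = 0 then 1 else rG x / Real.sinh (rG x)) *
    (t / (t ^ 2 + rG x ^ 2) ^ 2)

/-- Convolution `f ∗ q_t(x) = ∫ f(xy⁻¹) q_t(y) dρ(y)`. -/
def convPoisson (f : G → ℝ) (t : ℝ) (x : G) : ℝ := ∫ y, f (gMul x (gInv y)) * poissonK t y ∂ρG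

/-- The Poisson maximal operator `M̃f(x) = sup_{t>0} |f ∗ q_t(x)|`. -/
def maxPoisson (f : G → ℝ) (x : G) : ℝ≥0∞ :=
  ⨆ (t : ℝ) (_ : 0 < t), ENNReal.ofReal |convPoisson f t x|

/-- `G_{r₁}(x) = sup_{z ∈ B(x,r₁/2)} sup_{t>0} ‖∇p_t(z)‖`. -/
def Gsup (r1 : ℝ) (x : G) : ℝ≥0∞ :=
  ⨆ (z : G) (_ : 0 < z.2.2 ∧ dG x z < r1 / 2) (t : ℝ) (_ : 0 < t),
    ENNReal.ofReal (gradHeatNorm t z)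

/-- `R₀ = [−1,1]×[−1,1]×[e⁻¹,e]`. -/
def R0set : Set G :=
  Set.Icc (-1 : ℝ) 1 ×ˢ (Set.Icc (-1 : ℝ) 1 ×ˢ Set.Icc (Real.exp (-1)) (Real.exp 1))

/-- `R_L = [L−1,L+1]×[−1,1]×[e⁻¹,e]`. -/
def RLset (L : ℝ) : Set G :=
  Set.Icc (L - 1) (L + 1) ×ˢ (Set.Icc (-1 : ℝ) 1 ×ˢ Set.Icc (Real.exp (-1)) (Real.exp 1))

/-- `f_L = χ_{R_L} − χ_{R₀}`. -/
def fL (L : ℝ) : G → ℝ := fun x =>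
  (RLset L).indicator (fun _ => (1 : ℝ)) x - R0set.indicator (fun _ => (1 : ℝ)) x

/-- The mean of `g` over `R` with respect to `ρ`. -/
def czMean (g : G → ℝ) (R : Set G) : ℝ := (∫ x in R, g x ∂ρG) / (ρG R).toReal

/-- `‖g‖_{BMO} = sup_R ρ(R)⁻¹ ∫_R |g − g_R| dρ` over Calderón–Zygmund sets `R`. -/
def czBMO (g : G → ℝ) : ℝ≥0∞ :=
  ⨆ (R : Set G) (_ : IsCZ R),
    (ρG R)⁻¹ * ∫⁻ x in R, ENNReal.ofReal |g x - czMean g R| ∂ρG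

/-- `‖h‖_{BMO(ℝ)} = sup_Q |Q|⁻¹ ∫_Q |h − h_Q|` over bounded intervals `Q ⊂ ℝ`. -/
def lineBMO (h : ℝ → ℝ) : ℝ≥0∞ :=
  ⨆ (a : ℝ) (b : ℝ) (_ : a < b),
    (ENNReal.ofReal (b - a))⁻¹ *
      ∫⁻ s in Set.Icc a b, ENNReal.ofReal |h s - (∫ u in Set.Icc a b, h u) / (b - a)|

/-- `2R₀ = [−2,2]×[−2,2]×[e⁻²,e²]`. -/
def twoR0set : Set G :=
  Set.Icc (-2 : ℝ) 2 ×ˢ (Set.Icc (-2 : ℝ) 2 ×ˢ Set.Icc (Real.exp (-2)) (Real.exp 2))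

/-- The set `{x₁ > 3, |x₂| < 1, e⁻¹ < a < e}`. -/
def domSpecial : Set G :=
  {x : G | 3 < x.1 ∧ |x.2.1| < 1 ∧ Real.exp (-1) < x.2.2 ∧ x.2.2 < Real.exp 1}

/-- The function equal to `1/(x₁ (log x₁)^{3/2})` on `{x₁ > 3, |x₂| < 1, e⁻¹ < a < e}`,
to `c₀` on `R₀`, and `0` elsewhere. -/
def fSpecial (c0 : ℝ) : G → ℝ := fun x =>
  domSpecial.indicator (fun y => (y.1 * Real.log y.1 ^ ((3 : ℝ)/2))⁻¹) x
    + R0set.indicator (fun _ => c0) x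

/-!
Write `Q = 2 cosh r`, a submultiplicative gauge on `G`. The heat maximal function of `χ_{R₀}` is
bounded by a multiple of the majorant `1 / (a Q (1 + log Q)²)`, and that of `χ_{R_L}` by its
translate by `L`. When `|x|` is at least both `4 L` and `a`, the two convolutions nearly cancel:
the derivative of the heat kernel in the horizontal direction gains a factor `L / |x|`, which makes
this region contribute `O(1)`. The cone `|x| < 2 a` also contributes `O(1)`. On what remains, `|x|`
is `O(L)`, and integrating the majorant over the height, with `s = |x|²`, leaves
`∫ ds / ((1 + s) (1 + log (1 + s)))` over `s = O(L²)`, which is of order `log log L`.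
-/

/-! ### The right Haar measure -/

/-- The Haar measure `da / a` of the multiplicative group `ℝ⁺`, as a measure on `ℝ`. -/
def mulHaar : Measure ℝ :=
  volume.withDensity fun a => ENNReal.ofReal (if 0 < a then a⁻¹ else 0)

lemma measurable_mulHaar_density :
    Measurable fun a : ℝ => ENNReal.ofReal (if 0 < a then a⁻¹ else 0) :=
  (Measurable.ite measurableSet_Ioi measurable_inv measurable_const).ennreal_ofReal

lemma ρG_eq_prod : ρG = (volume : Measure ℝ).prod ((volume : Measure ℝ).prod mulHaar) := by
  have hd := measurable_mulHaar_density
  rw [mulHaar, prod_withDensity_right hd]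
  exact (prod_withDensity_right (hd.comp measurable_snd)).symm

lemma ae_pos_mulHaar : ∀ᵐ a ∂mulHaar, 0 < a := by
  rw [mulHaar, ae_withDensity_iff measurable_mulHaar_density]
  filter_upwards with a ha
  by_contra h
  exact ha (by simp [h])

instance : SFinite mulHaar := by unfold mulHaar; infer_instance

lemma ae_pos_ρG : ∀ᵐ x ∂ρG, 0 < x.2.2 := by
  rw [ρG_eq_prod]
  exact Measure.quasiMeasurePreserving_snd.ae (Measure.quasiMeasurePreserving_snd.ae ae_pos_mulHaar)

lemma measurePreserving_exp_mulHaar : MeasurePreserving exp volume mulHaar := by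
  refine ⟨measurable_exp, ?_⟩
  ext s hs
  have hpre : ∫⁻ u, s.indicator 1 (exp u) = volume (exp ⁻¹' s) := by
    rw [← lintegral_indicator_one (measurable_exp hs)]
    rfl
  have hsubst := lintegral_image_eq_lintegral_abs_deriv_mul MeasurableSet.univ
    (fun u _ => (hasDerivAt_exp u).hasDerivWithinAt) exp_injective.injOn
    fun a => ENNReal.ofReal a⁻¹ * s.indicator 1 a
  have hcancel (u : ℝ) : ENNReal.ofReal |exp u| * (ENNReal.ofReal (exp u)⁻¹ *
      s.indicator 1 (exp u)) = s.indicator 1 (exp u) := by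
    rw [← mul_assoc, ← ENNReal.ofReal_mul (abs_nonneg _), abs_exp,
      mul_inv_cancel₀ (exp_ne_zero u), ENNReal.ofReal_one, one_mul]
  simp_rw [image_univ, range_exp, hcancel, setLIntegral_univ] at hsubst
  rw [Measure.map_apply measurable_exp hs, ← hpre, ← hsubst, ← lintegral_indicator_one hs,
    mulHaar, lintegral_withDensity_eq_lintegral_mul _ measurable_mulHaar_density
      (measurable_one.indicator hs), ← lintegral_indicator measurableSet_Ioi]
  refine lintegral_congr fun a => ?_
  by_cases ha : 0 < a <;> simp [indicator, ha]

lemma measurePreserving_log_mulHaar : MeasurePreserving log mulHaar volume := by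
  refine ⟨measurable_log, ?_⟩
  rw [← measurePreserving_exp_mulHaar.map_eq, Measure.map_map measurable_log measurable_exp]
  simp [Function.comp_def]

lemma measurePreserving_mul_right_mulHaar {a : ℝ} (ha : 0 < a) :
    MeasurePreserving (· * a) mulHaar mulHaar := by
  refine ⟨measurable_mul_const a, ?_⟩
  have hexp : (· * a) ∘ exp = fun u => exp (u + log a) := by
    ext u
    simp [exp_add, exp_log ha]
  conv_lhs => rw [← measurePreserving_exp_mulHaar.map_eq,
    Measure.map_map (measurable_mul_const a) measurable_exp, hexp]
  exact (measurePreserving_exp_mulHaar.comp (measurePreserving_add_right volume (log a))).map_eq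

lemma measurePreserving_skew_fst {α β : Type*} [MeasurableSpace α] [MeasurableSpace β]
    {μ : Measure α} {ν : Measure β} [SFinite μ] [SFinite ν] {f : β → β} {g : β → α → α}
    (hf : MeasurePreserving f ν ν) (hg : Measurable (Function.uncurry g))
    (hgμ : ∀ b, MeasurePreserving (g b) μ μ) :
    MeasurePreserving (fun p : α × β => (g p.2 p.1, f p.2)) (μ.prod ν) (μ.prod ν) :=
  Measure.measurePreserving_swap.comp
    ((hf.skew_product hg (.of_forall fun b => (hgμ b).map_eq)).comp
      Measure.measurePreserving_swap)

lemma measurePreserving_gMul_right {x : G} (hx : 0 < x.2.2) :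
    MeasurePreserving (fun z => gMul z x) ρG ρG := by
  rw [ρG_eq_prod]
  have hinner := measurePreserving_skew_fst (measurePreserving_mul_right_mulHaar hx)
    (g := fun b y => y + b * x.2.1) (by fun_prop)
    fun b => measurePreserving_add_right (volume : Measure ℝ) (b * x.2.1)
  exact measurePreserving_skew_fst hinner (g := fun p y => y + p.2 * x.1) (by fun_prop)
    fun p => measurePreserving_add_right (volume : Measure ℝ) (p.2 * x.1)

/-- The left translation of `G` by `(-L, 0, 0)`, which carries `R_L` to `R₀`. -/
def shift (L : ℝ) (x : G) : G := (x.1 - L, x.2.1, x.2.2)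

lemma measurePreserving_shift (L : ℝ) : MeasurePreserving (shift L) ρG ρG := by
  rw [ρG_eq_prod]
  exact (measurePreserving_sub_right volume L).prod (.id _)

/-! ### Integration in the coordinates `(log a, |x|²)` -/

lemma measurable_normG : Measurable normG := by
  unfold normG
  fun_prop

lemma normG_nonneg (x : G) : 0 ≤ normG x := sqrt_nonneg _

lemma normG_sq (x : G) : normG x ^ 2 = x.1 ^ 2 + x.2.1 ^ 2 := sq_sqrt (by positivity)

lemma setLIntegral_Ioi_comp_sq (φ : ℝ → ℝ≥0∞) :
    ∫⁻ r in Ioi 0, ENNReal.ofReal (2 * r) * φ (r ^ 2) = ∫⁻ s in Ioi 0, φ s := by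
  have himage : (fun r : ℝ => r ^ 2) '' Ioi 0 = Ioi 0 := by
    ext s
    refine ⟨?_, fun hs => ⟨√s, sqrt_pos.mpr hs, sq_sqrt (mem_Ioi.mp hs).le⟩⟩
    rintro ⟨r, hr, rfl⟩
    exact pow_pos (mem_Ioi.mp hr) 2
  have hinj : InjOn (fun r : ℝ => r ^ 2) (Ioi 0) :=
    (pow_left_strictMonoOn₀ two_ne_zero).injOn.mono Ioi_subset_Ici_self
  have hsubst := lintegral_image_eq_lintegral_abs_deriv_mul measurableSet_Ioi
    (fun r _ => (hasDerivAt_pow 2 r).hasDerivWithinAt) hinj φ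
  rw [himage] at hsubst
  rw [hsubst]
  refine setLIntegral_congr_fun measurableSet_Ioi fun r hr => ?_
  simp [abs_of_pos (mem_Ioi.mp hr)]

lemma lintegral_comp_add_sq {φ : ℝ → ℝ≥0∞} (hφ : Measurable φ) :
    ∫⁻ p : ℝ × ℝ, φ (p.1 ^ 2 + p.2 ^ 2) = ENNReal.ofReal π * ∫⁻ s in Ioi 0, φ s := by
  have hpolar (p : ℝ × ℝ) :
      (polarCoord.symm p).1 ^ 2 + (polarCoord.symm p).2 ^ 2 = p.1 ^ 2 := by
    simp only [polarCoord_symm_apply]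
    linear_combination p.1 ^ 2 * sin_sq_add_cos_sq p.2
  have hangle (r : ℝ) : ∫⁻ _θ in Ioo (-π) π, ENNReal.ofReal r * φ (r ^ 2) =
      ENNReal.ofReal π * (ENNReal.ofReal (2 * r) * φ (r ^ 2)) := by
    have hlength : π - -π = π * 2 := by ring
    rw [setLIntegral_const, Real.volume_Ioo, hlength, ENNReal.ofReal_mul pi_pos.le,
      ENNReal.ofReal_mul zero_le_two]
    ring
  simp_rw [← lintegral_comp_polarCoord_symm, hpolar, smul_eq_mul]
  rw [polarCoord_target, Measure.volume_eq_prod, ← Measure.prod_restrict,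
    lintegral_prod _ (by fun_prop)]
  simp_rw [hangle]
  rw [lintegral_const_mul _ (by fun_prop), setLIntegral_Ioi_comp_sq]

lemma lintegral_comp_log_normG_sq {φ : ℝ → ℝ → ℝ≥0∞} (hφ : Measurable (Function.uncurry φ)) :
    ∫⁻ x, φ (log x.2.2) (normG x ^ 2) ∂ρG =
      ENNReal.ofReal π * ∫⁻ u, ∫⁻ s in Ioi 0, φ u s := by
  have hassoc := measurePreserving_prodAssoc (volume : Measure ℝ) (volume : Measure ℝ) mulHaar
  simp_rw [normG_sq]
  rw [ρG_eq_prod, ← hassoc.lintegral_comp (by fun_prop), lintegral_prod_symm _ (by fun_prop)]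
  simp only [MeasurableEquiv.prodAssoc, MeasurableEquiv.coe_mk, Equiv.prodAssoc_apply]
  have hplane (a : ℝ) : ∫⁻ p : ℝ × ℝ, φ (log a) (p.1 ^ 2 + p.2 ^ 2) =
      ENNReal.ofReal π * ∫⁻ s in Ioi 0, φ (log a) s :=
    lintegral_comp_add_sq (by fun_prop)
  have hinner : Measurable fun u => ∫⁻ s in Ioi 0, φ u s := hφ.lintegral_prod_right
  rw [← Measure.volume_eq_prod]
  simp_rw [hplane]
  rw [lintegral_const_mul _ (by fun_prop)]
  exact congrArg _ (measurePreserving_log_mulHaar.lintegral_comp hinner)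

/-! ### The gauge `2 cosh r` and the majorant -/

/-- The gauge `2 cosh r(x)`: it is submultiplicative and comparable with `exp r(x)`. -/
def expGauge (x : G) : ℝ := 2 * coshArg x

lemma measurable_coshArg : Measurable coshArg := by
  unfold coshArg
  fun_prop

lemma measurable_expGauge : Measurable expGauge := measurable_coshArg.const_mul 2

lemma height_mul_expGauge {x : G} (hx : 0 < x.2.2) :
    x.2.2 * expGauge x = 1 + x.2.2 ^ 2 + normG x ^ 2 := by
  rw [normG_sq, expGauge, coshArg]
  field_simp
  ring

lemma expGauge_eq_div {x : G} (hx : 0 < x.2.2) :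
    expGauge x = (1 + x.2.2 ^ 2 + normG x ^ 2) / x.2.2 :=
  eq_div_of_mul_eq hx.ne' (by rw [mul_comm, height_mul_expGauge hx])

lemma two_le_expGauge {x : G} (hx : 0 < x.2.2) : 2 ≤ expGauge x := by
  rw [expGauge_eq_div hx, le_div_iff₀ hx]
  nlinarith [sq_nonneg (x.2.2 - 1), sq_nonneg (normG x)]

lemma one_le_coshArg {x : G} (hx : 0 < x.2.2) : 1 ≤ coshArg x := by
  have := two_le_expGauge hx
  unfold expGauge at this
  linarith

lemma height_le_expGauge {x : G} (hx : 0 < x.2.2) : x.2.2 ≤ expGauge x := by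
  rw [expGauge_eq_div hx, le_div_iff₀ hx]
  nlinarith [sq_nonneg (normG x)]

lemma inv_height_le_expGauge {x : G} (hx : 0 < x.2.2) : x.2.2⁻¹ ≤ expGauge x := by
  rw [expGauge_eq_div hx, inv_eq_one_div]
  gcongr
  nlinarith [sq_nonneg (normG x), sq_nonneg x.2.2]

lemma normG_sq_le_height_mul_expGauge {x : G} (hx : 0 < x.2.2) :
    normG x ^ 2 ≤ x.2.2 * expGauge x := by
  rw [height_mul_expGauge hx]
  nlinarith [sq_nonneg x.2.2]

lemma gMul_height_pos {x y : G} (hx : 0 < x.2.2) (hy : 0 < y.2.2) : 0 < (gMul x y).2.2 :=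
  mul_pos hx hy

lemma gInv_height_pos {x : G} (hx : 0 < x.2.2) : 0 < (gInv x).2.2 := one_div_pos.mpr hx

lemma gInv_gMul_cancel_left {z : G} (hz : 0 < z.2.2) (x : G) : gMul (gInv z) (gMul z x) = x := by
  ext <;> simp only [gMul, gInv] <;> field_simp <;> ring

lemma expGauge_gInv {x : G} (hx : 0 < x.2.2) : expGauge (gInv x) = expGauge x := by
  simp only [expGauge, coshArg, gInv]
  field_simp
  ring

lemma expGauge_gMul_le {x y : G} (hx : 0 < x.2.2) (hy : 0 < y.2.2) :
    expGauge (gMul x y) ≤ expGauge x * expGauge y := by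
  rw [expGauge_eq_div hx, expGauge_eq_div hy, expGauge_eq_div (gMul_height_pos hx hy),
    div_mul_div_comm]
  refine div_le_div_of_nonneg_right ?_ (mul_pos hx hy).le
  simp only [normG_sq, gMul]
  -- The cross term `2 a ⟨x, y⟩` is absorbed by `a² + |x|² |y|²`.
  nlinarith [sq_nonneg (x.2.2 - (x.1 * y.1 + x.2.1 * y.2.1)),
    sq_nonneg (x.1 * y.2.1 - x.2.1 * y.1), sq_nonneg (x.2.2 * y.2.2), sq_nonneg x.1,
    sq_nonneg x.2.1, sq_nonneg y.1, sq_nonneg y.2.1, sq_nonneg y.2.2,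
    mul_nonneg (add_nonneg (sq_nonneg x.1) (sq_nonneg x.2.1)) (sq_nonneg y.2.2)]

lemma expGauge_le_mul_expGauge_gMul {z x : G} (hz : 0 < z.2.2) (hx : 0 < x.2.2) :
    expGauge x ≤ expGauge z * expGauge (gMul z x) := by
  simpa only [gInv_gMul_cancel_left hz, expGauge_gInv hz] using
    expGauge_gMul_le (gInv_height_pos hz) (gMul_height_pos hz hx)

lemma ρG_expGauge_le_lt_top (K : ℝ) : ρG {x | 0 < x.2.2 ∧ expGauge x ≤ K} < ⊤ := by
  let I := Icc (-log K) (log K)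
  let J := Icc 0 (K ^ 2)
  have hsub : {x : G | 0 < x.2.2 ∧ expGauge x ≤ K} ⊆ {x | log x.2.2 ∈ I ∧ normG x ^ 2 ∈ J} := by
    rintro x ⟨hx, hK⟩
    have hlow := log_le_log (inv_pos.mpr hx) ((inv_height_le_expGauge hx).trans hK)
    have hhigh := log_le_log hx ((height_le_expGauge hx).trans hK)
    rw [log_inv] at hlow
    refine ⟨⟨by linarith, hhigh⟩, sq_nonneg _, ?_⟩
    nlinarith [normG_sq_le_height_mul_expGauge hx, height_le_expGauge hx, two_le_expGauge hx]
  have hIJ : MeasurableSet (I ×ˢ J) := measurableSet_Icc.prod measurableSet_Icc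
  have hcoord : Measurable fun x : G => (log x.2.2, normG x ^ 2) := by
    have := measurable_normG
    fun_prop
  have hbox := lintegral_comp_log_normG_sq
    (φ := fun u s => (I ×ˢ J).indicator 1 (u, s)) (measurable_one.indicator hIJ)
  refine (measure_mono hsub).trans_lt ?_
  calc ρG ((fun x => (log x.2.2, normG x ^ 2)) ⁻¹' (I ×ˢ J))
      = ENNReal.ofReal π * (volume.prod (volume.restrict (Ioi 0))) (I ×ˢ J) := by
        rw [← lintegral_indicator_one (hcoord hIJ), ← lintegral_indicator_one hIJ,
          lintegral_prod _ (measurable_one.indicator hIJ).aemeasurable, ← hbox]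
        rfl
    _ < ⊤ := by
        rw [Measure.prod_prod]
        refine ENNReal.mul_lt_top ENNReal.ofReal_lt_top (ENNReal.mul_lt_top ?_ ?_)
        · exact measure_Icc_lt_top
        · exact (Measure.restrict_apply_le _ _).trans_lt measure_Icc_lt_top

/-- The majorant `1 / (a Q (1 + log Q)²)`, where `Q = 2 cosh r(x)`, of the heat maximal function
of the indicator of `R₀`. -/
def majorant (x : G) : ℝ := (x.2.2 * expGauge x * (1 + log (expGauge x)) ^ 2)⁻¹

lemma measurable_majorant : Measurable majorant := by
  have := measurable_expGauge
  unfold majorant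
  fun_prop

lemma log_expGauge_nonneg {x : G} (hx : 0 < x.2.2) : 0 ≤ log (expGauge x) :=
  log_nonneg (one_le_two.trans (two_le_expGauge hx))

lemma expGauge_pos {x : G} (hx : 0 < x.2.2) : 0 < expGauge x :=
  two_pos.trans_le (two_le_expGauge hx)

lemma majorant_pos {x : G} (hx : 0 < x.2.2) : 0 < majorant x := by
  have := log_expGauge_nonneg hx
  have := expGauge_pos hx
  unfold majorant
  positivity

lemma one_add_log_expGauge_le {z x : G} (hz : 0 < z.2.2) (hx : 0 < x.2.2) :
    1 + log (expGauge x) ≤ (1 + log (expGauge z)) * (1 + log (expGauge (gMul z x))) := by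
  have hzx := gMul_height_pos hz hx
  have hlog := log_le_log (expGauge_pos hx) (expGauge_le_mul_expGauge_gMul hz hx)
  rw [log_mul (expGauge_pos hz).ne' (expGauge_pos hzx).ne'] at hlog
  nlinarith [mul_nonneg (log_expGauge_nonneg hz) (log_expGauge_nonneg hzx)]

lemma majorant_gMul_le {z x : G} (hz : 0 < z.2.2) (hx : 0 < x.2.2) :
    majorant (gMul z x) ≤ expGauge z ^ 2 * (1 + log (expGauge z)) ^ 2 * majorant x := by
  have hzx := gMul_height_pos hz hx
  have := expGauge_pos hz
  have := expGauge_pos hx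
  have := expGauge_pos hzx
  have := log_expGauge_nonneg hz
  have := log_expGauge_nonneg hx
  have := log_expGauge_nonneg hzx
  have hheight : x.2.2 ≤ expGauge z * (gMul z x).2.2 := by
    calc x.2.2 = z.2.2⁻¹ * (z.2.2 * x.2.2) := by field_simp
      _ ≤ expGauge z * (z.2.2 * x.2.2) := by
        gcongr
        exact inv_height_le_expGauge hz
  rw [majorant, majorant, ← div_eq_mul_inv, inv_le_comm₀ (by positivity) (by positivity), inv_div,
    div_le_iff₀ (by positivity)]
  calc x.2.2 * expGauge x * (1 + log (expGauge x)) ^ 2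
      ≤ (expGauge z * (gMul z x).2.2) * (expGauge z * expGauge (gMul z x)) *
          ((1 + log (expGauge z)) * (1 + log (expGauge (gMul z x)))) ^ 2 := by
        gcongr
        · exact expGauge_le_mul_expGauge_gMul hz hx
        · exact one_add_log_expGauge_le hz hx
    _ = _ := by ring

lemma majorant_ge_of_expGauge_le {x : G} (hx : 0 < x.2.2) {K : ℝ} (hK : expGauge x ≤ K) :
    (K ^ 2 * (1 + log K) ^ 2)⁻¹ ≤ majorant x := by
  have := log_expGauge_nonneg hx
  have := expGauge_pos hx
  have hlog : log (expGauge x) ≤ log K := log_le_log (expGauge_pos hx) hK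
  have hheight := (height_le_expGauge hx).trans hK
  have hKpos : 0 ≤ K := (expGauge_pos hx).le.trans hK
  rw [majorant, sq K]
  gcongr

/-! ### The set of inverses of `R₀` -/

/-- The set `R₀⁻¹`. -/
def R0inv : Set G := gInv ⁻¹' R0set

lemma measurableSet_R0inv : MeasurableSet R0inv := by
  have hinv : Measurable gInv := by
    unfold gInv
    fun_prop
  exact hinv (measurableSet_Icc.prod (measurableSet_Icc.prod measurableSet_Icc))

lemma height_pos_of_mem_R0inv {z : G} (hz : z ∈ R0inv) : 0 < z.2.2 :=
  one_div_pos.mp ((exp_pos _).trans_le hz.2.2.1)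

lemma expGauge_le_of_mem_R0set {w : G} (hw : w ∈ R0set) : expGauge w ≤ 12 := by
  obtain ⟨⟨h1, h1'⟩, ⟨h2, h2'⟩, h3, h3'⟩ := hw
  have : 0 < w.2.2 := (exp_pos _).trans_le h3
  have hexp : exp 1 ≤ 3 := by linarith [exp_one_lt_d9]
  have hinv : w.2.2⁻¹ ≤ 3 := by
    refine (inv_anti₀ (exp_pos _) h3).trans ?_
    rwa [exp_neg, inv_inv]
  have hnorm : w.1 ^ 2 + w.2.1 ^ 2 ≤ 2 := by nlinarith
  have hprod : w.2.2⁻¹ * (w.1 ^ 2 + w.2.1 ^ 2) ≤ 3 * 2 := by gcongr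
  unfold expGauge coshArg
  linarith

lemma expGauge_le_of_mem_R0inv {z : G} (hz : z ∈ R0inv) : expGauge z ≤ 12 := by
  rw [← expGauge_gInv (height_pos_of_mem_R0inv hz)]
  exact expGauge_le_of_mem_R0set hz

lemma ρG_R0inv_lt_top : ρG R0inv < ⊤ :=
  (ρG_expGauge_le_lt_top 12).trans_le' <| measure_mono fun _ hz =>
    ⟨height_pos_of_mem_R0inv hz, expGauge_le_of_mem_R0inv hz⟩

/-! ### The radial profile of the heat kernel -/

/-- The heat kernel of `G` is `δ^{1/2}` times this function of `t` and `r(x)`. -/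
def radialHeat (t r : ℝ) : ℝ :=
  (8 * π ^ ((3 : ℝ) / 2))⁻¹ * (if r = 0 then 1 else r / sinh r) * t ^ (-(3 : ℝ) / 2) *
    exp (-(r ^ 2) / (4 * t))

lemma heatK_eq_inv_mul_radialHeat (t : ℝ) {x : G} (hx : 0 < x.2.2) :
    heatK t x = x.2.2⁻¹ * radialHeat t (arcosh (coshArg x)) := by
  have hδ : √(deltaG x) = x.2.2⁻¹ := by rw [deltaG, sqrt_inv, sqrt_sq hx.le]
  rw [heatK, hδ, radialHeat, ← show rG x = arcosh (coshArg x) from rfl]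
  ring

lemma measurable_radialHeat (t : ℝ) : Measurable (radialHeat t) := by
  have hratio : Measurable fun r : ℝ => if r = 0 then 1 else r / sinh r :=
    .ite (measurableSet_singleton 0) measurable_const (measurable_id.div measurable_sinh)
  unfold radialHeat
  fun_prop

lemma measurable_arcosh : Measurable arcosh := by
  unfold arcosh
  fun_prop

lemma measurable_heatK (t : ℝ) : Measurable (heatK t) := by
  have hratio : Measurable fun r : ℝ => if r = 0 then 1 else r / sinh r :=
    .ite (measurableSet_singleton 0) measurable_const (measurable_id.div measurable_sinh)
  have hδ : Measurable deltaG := by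
    unfold deltaG
    fun_prop
  have hr : Measurable rG := measurable_arcosh.comp measurable_coshArg
  have := hratio.comp hr
  unfold heatK
  fun_prop

lemma radialHeat_nonneg {t r : ℝ} (ht : 0 < t) (hr : 0 ≤ r) : 0 ≤ radialHeat t r := by
  have : 0 ≤ if r = 0 then 1 else r / sinh r := by
    split_ifs
    · exact zero_le_one
    · exact div_nonneg hr (sinh_nonneg_iff.mpr hr)
  unfold radialHeat
  positivity

lemma heatK_nonneg {t : ℝ} (ht : 0 < t) {x : G} (hx : 0 < x.2.2) : 0 ≤ heatK t x := by
  rw [heatK_eq_inv_mul_radialHeat t hx]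
  exact mul_nonneg (inv_pos.mpr hx).le
    (radialHeat_nonneg ht (arcosh_nonneg (one_le_coshArg hx)))

lemma radialHeat_of_pos (t : ℝ) {r : ℝ} (hr : 0 < r) :
    radialHeat t r = (8 * π ^ ((3 : ℝ) / 2))⁻¹ * (r / sinh r) * t ^ (-(3 : ℝ) / 2) *
      exp (-(r ^ 2) / (4 * t)) := by
  rw [radialHeat, if_neg hr.ne']

lemma rpow_mul_exp_neg_le {α x : ℝ} (hα : 0 < α) (hx : 0 ≤ x) : x ^ α * exp (-x) ≤ α ^ α := by
  have hdiv : x / α ≤ exp (x / α) := by linarith [add_one_le_exp (x / α)]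
  have hpow : x ^ α ≤ α ^ α * exp x := by
    calc x ^ α = α ^ α * (x / α) ^ α := by
          rw [← mul_rpow hα.le (by positivity), mul_div_cancel₀ x hα.ne']
      _ ≤ α ^ α * exp (x / α) ^ α := by gcongr
      _ = α ^ α * exp x := by rw [← exp_mul, div_mul_cancel₀ x hα.ne']
  rwa [exp_neg, ← div_eq_mul_inv, div_le_iff₀ (exp_pos x)]

lemma rpow_neg_mul_exp_le {α t r : ℝ} (hα : 0 < α) (ht : 0 < t) (hr : 0 < r) :
    t ^ (-α) * exp (-(r ^ 2) / (4 * t)) ≤ (4 * α) ^ α * r ^ (-(2 * α)) := by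
  have hmax := rpow_mul_exp_neg_le hα (x := r ^ 2 / (4 * t)) (by positivity)
  have ht' : t ^ (-α) = (4 * r ^ (-2 : ℝ)) ^ α * (r ^ 2 / (4 * t)) ^ α := by
    rw [← mul_rpow (by positivity) (by positivity), rpow_neg ht.le, ← inv_rpow ht.le,
      rpow_neg hr.le, rpow_two]
    field_simp
  have hr' : r ^ (-(2 * α)) = (r ^ (-2 : ℝ)) ^ α := by
    rw [← rpow_mul hr.le, neg_mul]
  calc t ^ (-α) * exp (-(r ^ 2) / (4 * t))
      = (4 * r ^ (-2 : ℝ)) ^ α * ((r ^ 2 / (4 * t)) ^ α * exp (-(r ^ 2 / (4 * t)))) := by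
        rw [ht', neg_div, mul_assoc]
    _ ≤ (4 * r ^ (-2 : ℝ)) ^ α * α ^ α := by gcongr
    _ = (4 * α) ^ α * r ^ (-(2 * α)) := by
        rw [hr', mul_rpow (by positivity) (by positivity), mul_rpow (by positivity) hα.le]
        ring

lemma rpow_neg_three_halves_mul_exp_le {t r : ℝ} (ht : 0 < t) (hr : 0 < r) :
    t ^ (-(3 : ℝ) / 2) * exp (-(r ^ 2) / (4 * t)) ≤ 36 / r ^ 3 := by
  have hexponent : -(2 * (3 / 2 : ℝ)) = -(3 : ℕ) := by norm_num
  have hconst : (4 * (3 / 2) : ℝ) ^ (3 / 2 : ℝ) ≤ 36 := by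
    calc (4 * (3 / 2) : ℝ) ^ (3 / 2 : ℝ) ≤ (4 * (3 / 2)) ^ (2 : ℝ) :=
          rpow_le_rpow_of_exponent_le (by norm_num) (by norm_num)
      _ = 36 := by norm_num
  have hbound := rpow_neg_mul_exp_le (α := 3 / 2) (by norm_num) ht hr
  rw [hexponent, rpow_neg hr.le, rpow_natCast, ← neg_div] at hbound
  refine hbound.trans ?_
  rw [div_eq_mul_inv 36]
  gcongr

lemma rpow_neg_three_halves_mul_exp_div_le {t r : ℝ} (ht : 0 < t) (hr : 0 < r) :
    t ^ (-(3 : ℝ) / 2) * exp (-(r ^ 2) / (4 * t)) / t ≤ 1000 / r ^ 5 := by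
  have hexponent : -(2 * (5 / 2 : ℝ)) = -(5 : ℕ) := by norm_num
  have hconst : (4 * (5 / 2) : ℝ) ^ (5 / 2 : ℝ) ≤ 1000 := by
    calc (4 * (5 / 2) : ℝ) ^ (5 / 2 : ℝ) ≤ (4 * (5 / 2)) ^ (3 : ℝ) :=
          rpow_le_rpow_of_exponent_le (by norm_num) (by norm_num)
      _ = 1000 := by norm_num
  have hsplit : t ^ (-(5 / 2) : ℝ) = t ^ (-(3 : ℝ) / 2) / t := by
    rw [← rpow_sub_one ht.ne']
    norm_num
  have hbound := rpow_neg_mul_exp_le (α := 5 / 2) (by norm_num) ht hr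
  rw [hexponent, rpow_neg hr.le, rpow_natCast, hsplit, div_mul_eq_mul_div] at hbound
  refine hbound.trans ?_
  rw [div_eq_mul_inv 1000]
  gcongr

lemma inv_eight_mul_pi_rpow_le_one : (8 * π ^ ((3 : ℝ) / 2))⁻¹ ≤ 1 := by
  have hπ : 1 ≤ π ^ ((3 : ℝ) / 2) :=
    one_le_rpow (by linarith [pi_gt_three]) (by norm_num)
  exact inv_le_one_of_one_le₀ (by linarith)

lemma radialHeat_le {t r : ℝ} (ht : 0 < t) (hr : 0 < r) :
    radialHeat t r ≤ 36 / (sinh r * r ^ 2) := by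
  have : 0 < sinh r := sinh_pos_iff.mpr hr
  have htime := rpow_neg_three_halves_mul_exp_le ht hr
  calc radialHeat t r
      = (8 * π ^ ((3 : ℝ) / 2))⁻¹ * ((r / sinh r) *
          (t ^ (-(3 : ℝ) / 2) * exp (-(r ^ 2) / (4 * t)))) := by
        rw [radialHeat_of_pos t hr]
        ring
    _ ≤ 1 * ((r / sinh r) * (36 / r ^ 3)) := by
        gcongr
        exact inv_eight_mul_pi_rpow_le_one
    _ = 36 / (sinh r * r ^ 2) := by field_simp

lemma cosh_le_two_mul_sinh {r : ℝ} (hr : 1 ≤ r) : cosh r ≤ 2 * sinh r := by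
  have hexp : 2 ≤ exp r := by linarith [add_one_le_exp r]
  have hexp_neg : exp (-r) ≤ 2⁻¹ := by
    rw [exp_neg]
    gcongr
  rw [cosh_eq, sinh_eq]
  linarith

lemma hasDerivAt_radialHeat {t r : ℝ} (ht : 0 < t) (hr : 0 < r) :
    HasDerivAt (radialHeat t)
      ((8 * π ^ ((3 : ℝ) / 2))⁻¹ * (t ^ (-(3 : ℝ) / 2) * exp (-(r ^ 2) / (4 * t))) *
        (1 / sinh r - r * cosh r / sinh r ^ 2 - r ^ 2 / (2 * t * sinh r))) r := by
  have hsinh : sinh r ≠ 0 := (sinh_pos_iff.mpr hr).ne'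
  have hexp : HasDerivAt (fun r => exp (-(r ^ 2) / (4 * t)))
      (exp (-(r ^ 2) / (4 * t)) * (-(2 * r) / (4 * t))) r := by
    simpa using ((hasDerivAt_pow 2 r).neg.div_const (4 * t)).exp
  have hprod := ((((hasDerivAt_id r).div (hasDerivAt_sinh r) hsinh).const_mul
    (8 * π ^ ((3 : ℝ) / 2))⁻¹).mul_const (t ^ (-(3 : ℝ) / 2))).mul hexp
  refine (hprod.congr_deriv ?_).congr_of_eventuallyEq ?_
  · simp only [id, Pi.div_apply]
    field_simp
    ring
  · filter_upwards [eventually_gt_nhds hr] with s hs using radialHeat_of_pos t hs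

lemma abs_deriv_radialHeat_le {t r : ℝ} (ht : 0 < t) (hr : 1 ≤ r) :
    |deriv (radialHeat t) r| ≤ 608 / (sinh r * r ^ 2) := by
  have hr0 : 0 < r := one_pos.trans_le hr
  have hsinh : 0 < sinh r := sinh_pos_iff.mpr hr0
  set w := t ^ (-(3 : ℝ) / 2) * exp (-(r ^ 2) / (4 * t)) with hw
  have hw0 : 0 < w := by positivity
  have hcosh : r * cosh r / sinh r ^ 2 ≤ 2 * r / sinh r := by
    rw [div_le_div_iff₀ (by positivity) hsinh]
    nlinarith [mul_le_mul_of_nonneg_left (cosh_le_two_mul_sinh hr) (mul_pos hr0 hsinh).le]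
  have hbracket : |1 / sinh r - r * cosh r / sinh r ^ 2 - r ^ 2 / (2 * t * sinh r)| ≤
      (3 * r + r ^ 2 / (2 * t)) / sinh r := by
    have hlow : 0 ≤ r * cosh r / sinh r ^ 2 := by positivity
    have hlow' : 0 ≤ r ^ 2 / (2 * t * sinh r) := by positivity
    have hone : 1 / sinh r ≤ r / sinh r := by gcongr
    have hsplit : (3 * r + r ^ 2 / (2 * t)) / sinh r =
        r / sinh r + 2 * r / sinh r + r ^ 2 / (2 * t * sinh r) := by
      field_simp
      ring
    have : 0 ≤ 1 / sinh r := by positivity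
    rw [hsplit, abs_le]
    constructor <;> linarith
  rw [(hasDerivAt_radialHeat ht hr0).deriv, ← hw, abs_mul, abs_of_pos (by positivity)]
  calc (8 * π ^ ((3 : ℝ) / 2))⁻¹ * w *
        |1 / sinh r - r * cosh r / sinh r ^ 2 - r ^ 2 / (2 * t * sinh r)|
      ≤ 1 * w * ((3 * r + r ^ 2 / (2 * t)) / sinh r) := by
        gcongr
        exact inv_eight_mul_pi_rpow_le_one
    _ = (3 * r * w + r ^ 2 / 2 * (w / t)) / sinh r := by
        field_simp
    _ ≤ (3 * r * (36 / r ^ 3) + r ^ 2 / 2 * (1000 / r ^ 5)) / sinh r := by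
        gcongr (3 * r * ?_ + r ^ 2 / 2 * ?_) / sinh r
        · exact rpow_neg_three_halves_mul_exp_le ht hr0
        · exact rpow_neg_three_halves_mul_exp_div_le ht hr0
    _ = (108 + 500 / r) / (sinh r * r ^ 2) := by
        field_simp
        ring
    _ ≤ 608 / (sinh r * r ^ 2) := by
        have hdiv : 500 / r ≤ 500 := div_le_self (by norm_num) hr
        gcongr
        linarith

/-- The radial profile of the heat kernel as a function of `cosh r`. -/
def heatProfile (t D : ℝ) : ℝ := radialHeat t (arcosh D)

lemma measurable_heatProfile (t : ℝ) : Measurable (heatProfile t) :=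
  (measurable_radialHeat t).comp measurable_arcosh

lemma heatK_eq_inv_mul_heatProfile (t : ℝ) {x : G} (hx : 0 < x.2.2) :
    heatK t x = x.2.2⁻¹ * heatProfile t (coshArg x) :=
  heatK_eq_inv_mul_radialHeat t hx

lemma half_le_sinh_arcosh {D : ℝ} (hD : 2 ≤ D) : D / 2 ≤ sinh (arcosh D) := by
  rw [sinh_arcosh (one_le_two.trans hD)]
  exact le_sqrt_of_sq_le (by nlinarith)

lemma log_le_arcosh {D : ℝ} (hD : 0 < D) : log D ≤ arcosh D :=
  log_le_log hD (le_add_of_nonneg_right (sqrt_nonneg _))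

lemma one_le_log {D : ℝ} (hD : 3 ≤ D) : 1 ≤ log D := by
  rw [le_log_iff_exp_le (by linarith)]
  linarith [exp_one_lt_d9]

lemma one_le_arcosh {D : ℝ} (hD : 3 ≤ D) : 1 ≤ arcosh D :=
  (one_le_log hD).trans (log_le_arcosh (by linarith))

lemma one_add_log_two_mul_le_arcosh {D : ℝ} (hD : 3 ≤ D) :
    1 + log (2 * D) ≤ 3 * arcosh D := by
  rw [log_mul two_ne_zero (by linarith)]
  linarith [log_two_lt_d9, one_le_log hD, log_le_arcosh (show 0 < D by linarith)]

lemma one_add_log_two_mul_pos {D : ℝ} (hD : 3 ≤ D) : 0 < 1 + log (2 * D) := by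
  linarith [log_nonneg (show (1 : ℝ) ≤ 2 * D by linarith)]

lemma heatProfile_le {t D : ℝ} (ht : 0 < t) (hD : 3 ≤ D) :
    heatProfile t D ≤ 1296 / (2 * D * (1 + log (2 * D)) ^ 2) := by
  have hr := one_add_log_two_mul_le_arcosh hD
  have hlog := one_add_log_two_mul_pos hD
  have hsinh := half_le_sinh_arcosh (show 2 ≤ D by linarith)
  have hsinh_pos : 0 < sinh (arcosh D) := hsinh.trans_lt' (by linarith)
  calc heatProfile t D ≤ 36 / (sinh (arcosh D) * arcosh D ^ 2) :=
        radialHeat_le ht (one_pos.trans_le (one_le_arcosh hD))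
    _ ≤ 36 / (D / 2 * ((1 + log (2 * D)) / 3) ^ 2) := by
        gcongr
        linarith
    _ = 1296 / (2 * D * (1 + log (2 * D)) ^ 2) := by
        field_simp
        norm_num

lemma hasDerivAt_heatProfile {t D : ℝ} (ht : 0 < t) (hD : 3 ≤ D) :
    HasDerivAt (heatProfile t)
      (deriv (radialHeat t) (arcosh D) * (sinh (arcosh D))⁻¹) D := by
  rw [sinh_arcosh (by linarith)]
  have hr := hasDerivAt_radialHeat ht (one_pos.trans_le (one_le_arcosh hD))
  exact hr.differentiableAt.hasDerivAt.comp D (hasDerivAt_arcosh (mem_Ioi.mpr (by linarith)))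

lemma abs_deriv_heatProfile_le {t D : ℝ} (ht : 0 < t) (hD : 3 ≤ D) :
    |deriv (heatProfile t) D| ≤ 21888 / (D * (1 + log (2 * D))) ^ 2 := by
  have hlog := one_add_log_two_mul_pos hD
  have hsinh := half_le_sinh_arcosh (show 2 ≤ D by linarith)
  have hsinh_pos : 0 < sinh (arcosh D) := hsinh.trans_lt' (by linarith)
  rw [(hasDerivAt_heatProfile ht hD).deriv, abs_mul, abs_of_pos (inv_pos.mpr hsinh_pos)]
  calc |deriv (radialHeat t) (arcosh D)| * (sinh (arcosh D))⁻¹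
      ≤ 608 / (sinh (arcosh D) * arcosh D ^ 2) * (sinh (arcosh D))⁻¹ := by
        gcongr
        exact abs_deriv_radialHeat_le ht (one_le_arcosh hD)
    _ ≤ 608 / (D / 2 * ((1 + log (2 * D)) / 3) ^ 2) * (D / 2)⁻¹ := by
        gcongr
        linarith [one_add_log_two_mul_le_arcosh hD]
    _ = 21888 / (D * (1 + log (2 * D))) ^ 2 := by
        field_simp
        norm_num

lemma abs_heatProfile_sub_le {t m D D' : ℝ} (ht : 0 < t) (hm : 3 ≤ m) (hD : m ≤ D)
    (hD' : m ≤ D') :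
    |heatProfile t D - heatProfile t D'| ≤
      21888 / (m * (1 + log (2 * m))) ^ 2 * |D - D'| := by
  have hlog := one_add_log_two_mul_pos hm
  refine (convex_Ici m).norm_image_sub_le_of_norm_deriv_le (f := heatProfile t)
    (fun E hE => (hasDerivAt_heatProfile ht (hm.trans hE)).differentiableAt)
    (fun E hE => ?_) hD' hD
  refine (abs_deriv_heatProfile_le ht (hm.trans hE)).trans ?_
  have hE' : m ≤ E := hE
  have hE0 : 0 ≤ E := by linarith
  gcongr

lemma heatK_le_majorant {t : ℝ} (ht : 0 < t) {x : G} (hx : 0 < x.2.2) (hQ : 6 ≤ expGauge x) :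
    heatK t x ≤ 1296 * majorant x := by
  have hD : 3 ≤ coshArg x := by
    rw [expGauge] at hQ
    linarith
  calc heatK t x = x.2.2⁻¹ * heatProfile t (coshArg x) := heatK_eq_inv_mul_heatProfile t hx
    _ ≤ x.2.2⁻¹ * (1296 / (expGauge x * (1 + log (expGauge x)) ^ 2)) := by
        gcongr
        exact heatProfile_le ht hD
    _ = 1296 * majorant x := by
        rw [majorant, mul_assoc, mul_inv x.2.2]
        ring

/-! ### The mass of the heat kernel -/

lemma coshArg_eq_cosh_log {x : G} (hx : 0 < x.2.2) :
    coshArg x = cosh (log x.2.2) + normG x ^ 2 * exp (-log x.2.2) / 2 := by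
  rw [cosh_eq, exp_neg, exp_log hx, normG_sq, coshArg]
  ring

lemma image_cosh_sub_cosh (u : ℝ) :
    (fun r => 2 * exp u * (cosh r - cosh u)) '' Ioi |u| = Ioi 0 := by
  ext s
  constructor
  · rintro ⟨r, hr, rfl⟩
    have hlt : cosh u < cosh r := cosh_lt_cosh.mpr (lt_of_lt_of_le hr (le_abs_self r))
    exact mul_pos (by positivity) (sub_pos.mpr hlt)
  · intro hs
    have hs' : 0 < s * exp (-u) / 2 := by
      have := mem_Ioi.mp hs
      positivity
    have hcosh := one_le_cosh u
    refine ⟨arcosh (cosh u + s * exp (-u) / 2), ?_, ?_⟩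
    · rw [mem_Ioi, ← arcosh_cosh (abs_nonneg u), cosh_abs]
      exact (arcosh_lt_arcosh (by linarith) (by linarith)).mpr (by linarith)
    · beta_reduce
      rw [cosh_arcosh (by linarith), exp_neg]
      field_simp
      ring

lemma lintegral_Ioi_exp_neg_mul_comp_cosh_add (Φ : ℝ → ℝ≥0∞) (u : ℝ) :
    ∫⁻ s in Ioi 0, ENNReal.ofReal (exp (-u)) * Φ (cosh u + s * exp (-u) / 2) =
      ∫⁻ r in Ioi |u|, ENNReal.ofReal (2 * sinh r) * Φ (cosh r) := by
  have hderiv (r : ℝ) : HasDerivAt (fun r => 2 * exp u * (cosh r - cosh u))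
      (2 * exp u * sinh r) r :=
    ((hasDerivAt_cosh r).sub_const (cosh u)).const_mul (2 * exp u)
  have hinj : InjOn (fun r => 2 * exp u * (cosh r - cosh u)) (Ioi |u|) := by
    intro r hr r' hr' h
    have hcosh : cosh r = cosh r' := by simpa [exp_ne_zero] using h
    exact cosh_strictMonoOn.injOn ((abs_nonneg u).trans (le_of_lt hr))
      ((abs_nonneg u).trans (le_of_lt hr')) hcosh
  rw [← image_cosh_sub_cosh u, lintegral_image_eq_lintegral_abs_deriv_mul measurableSet_Ioi
    (fun r _ => (hderiv r).hasDerivWithinAt) hinj]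
  refine setLIntegral_congr_fun measurableSet_Ioi fun r hr => ?_
  have hsinh : 0 ≤ sinh r := sinh_nonneg_iff.mpr ((abs_nonneg u).trans (le_of_lt hr))
  have harg : cosh u + 2 * exp u * (cosh r - cosh u) * exp (-u) / 2 = cosh r := by
    rw [exp_neg]
    field_simp
    ring
  have hjac : |2 * exp u * sinh r| * exp (-u) = 2 * sinh r := by
    rw [abs_of_nonneg (by positivity), exp_neg]
    field_simp
  simp only [harg]
  rw [← mul_assoc, ← ENNReal.ofReal_mul (abs_nonneg _), hjac]

lemma lintegral_setLIntegral_Ioi_abs {h : ℝ → ℝ≥0∞} (hh : Measurable h) :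
    ∫⁻ u : ℝ, ∫⁻ r in Ioi |u|, h r = ∫⁻ r in Ioi 0, ENNReal.ofReal (2 * r) * h r := by
  have hset : MeasurableSet {p : ℝ × ℝ | |p.1| < p.2} :=
    measurableSet_lt measurable_fst.norm measurable_snd
  have hlength (r : ℝ) : ∫⁻ u : ℝ, {p : ℝ × ℝ | |p.1| < p.2}.indicator (fun p => h p.2) (u, r) =
      (Ioi 0).indicator (fun r => ENNReal.ofReal (2 * r) * h r) r := by
    have hslice : (fun u : ℝ => {p : ℝ × ℝ | |p.1| < p.2}.indicator (fun p => h p.2) (u, r)) =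
        (Ioo (-r) r).indicator fun _ => h r := by
      ext u
      simp only [indicator, mem_ofPred_eq, mem_Ioo, abs_lt]
    have hdiam : r - -r = 2 * r := by ring
    rw [hslice, lintegral_indicator measurableSet_Ioo, setLIntegral_const, Real.volume_Ioo, hdiam,
      mul_comm]
    rcases lt_or_ge 0 r with hr | hr
    · rw [indicator_of_mem (mem_Ioi.mpr hr)]
    · rw [indicator_of_notMem (notMem_Ioi.mpr hr),
        ENNReal.ofReal_of_nonpos (by linarith), zero_mul]
  calc ∫⁻ u : ℝ, ∫⁻ r in Ioi |u|, h r
      = ∫⁻ u : ℝ, ∫⁻ r, {p : ℝ × ℝ | |p.1| < p.2}.indicator (fun p => h p.2) (u, r) := by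
        refine lintegral_congr fun u => ?_
        rw [← lintegral_indicator measurableSet_Ioi]
        rfl
    _ = ∫⁻ r, ∫⁻ u : ℝ, {p : ℝ × ℝ | |p.1| < p.2}.indicator (fun p => h p.2) (u, r) :=
        lintegral_lintegral_swap ((hh.comp measurable_snd).indicator hset).aemeasurable
    _ = ∫⁻ r in Ioi 0, ENNReal.ofReal (2 * r) * h r := by
        rw [← lintegral_indicator measurableSet_Ioi]
        exact lintegral_congr hlength

lemma lintegral_inv_height_mul_comp_coshArg {Φ : ℝ → ℝ≥0∞} (hΦ : Measurable Φ) :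
    ∫⁻ x, ENNReal.ofReal x.2.2⁻¹ * Φ (coshArg x) ∂ρG =
      ∫⁻ r in Ioi 0, ENNReal.ofReal (4 * π * r * sinh r) * Φ (cosh r) := by
  have hcoord : ∀ᵐ x ∂ρG, ENNReal.ofReal x.2.2⁻¹ * Φ (coshArg x) =
      ENNReal.ofReal (exp (-log x.2.2)) *
        Φ (cosh (log x.2.2) + normG x ^ 2 * exp (-log x.2.2) / 2) := by
    filter_upwards [ae_pos_ρG] with x hx
    rw [coshArg_eq_cosh_log hx, exp_neg, exp_log hx]
  have hφ : Measurable (Function.uncurry fun u s =>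
      ENNReal.ofReal (exp (-u)) * Φ (cosh u + s * exp (-u) / 2)) := by
    have := measurable_cosh
    fun_prop
  rw [lintegral_congr_ae hcoord, lintegral_comp_log_normG_sq hφ]
  simp_rw [lintegral_Ioi_exp_neg_mul_comp_cosh_add]
  have hmeas : Measurable fun r => ENNReal.ofReal (2 * sinh r) * Φ (cosh r) := by
    have := measurable_cosh
    have := measurable_sinh
    fun_prop
  rw [lintegral_setLIntegral_Ioi_abs hmeas, ← lintegral_const_mul _ (by fun_prop)]
  refine setLIntegral_congr_fun measurableSet_Ioi fun r hr => ?_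
  have hr0 : 0 < r := hr
  rw [← mul_assoc, ← mul_assoc, ← ENNReal.ofReal_mul pi_pos.le,
    ← ENNReal.ofReal_mul (by positivity)]
  ring_nf

lemma integral_Ioi_sq_mul_exp_neg_sq_div {t : ℝ} (ht : 0 < t) :
    ∫ r in Ioi (0 : ℝ), r ^ 2 * exp (-(r ^ 2) / (4 * t)) = 2 * √π * t ^ ((3 : ℝ) / 2) := by
  have hmoment := integral_rpow_mul_exp_neg_mul_rpow (p := 2) (q := 2) (b := (4 * t)⁻¹)
    two_pos (by norm_num) (by positivity)
  have hGamma : Gamma ((2 + 1) / 2) = √π / 2 := by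
    rw [show ((2 : ℝ) + 1) / 2 = 1 / 2 + 1 by norm_num, Gamma_add_one (by norm_num),
      Gamma_one_half_eq]
    ring
  have hscale : ((4 * t)⁻¹ : ℝ) ^ (-(2 + 1) / 2 : ℝ) = 8 * t ^ ((3 : ℝ) / 2) := by
    have hfour : (4 : ℝ) ^ ((3 : ℝ) / 2) = 8 := by
      rw [show (4 : ℝ) = 2 ^ (2 : ℝ) by norm_num, ← rpow_mul zero_le_two]
      norm_num
    rw [inv_rpow (by positivity), ← rpow_neg (by positivity), ← neg_div, neg_neg,
      mul_rpow (by norm_num) ht.le, show ((2 : ℝ) + 1) / 2 = 3 / 2 by norm_num, hfour]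
  simp only [rpow_two, hGamma, hscale] at hmoment
  calc ∫ r in Ioi (0 : ℝ), r ^ 2 * exp (-(r ^ 2) / (4 * t))
      = ∫ r in Ioi (0 : ℝ), r ^ 2 * exp (-(4 * t)⁻¹ * r ^ 2) := by
        refine integral_congr_ae (.of_forall fun r => ?_)
        beta_reduce
        ring_nf
    _ = 8 * t ^ ((3 : ℝ) / 2) * (1 / 2) * (√π / 2) := hmoment
    _ = 2 * √π * t ^ ((3 : ℝ) / 2) := by ring

lemma lintegral_Ioi_mul_radialHeat {t : ℝ} (ht : 0 < t) :
    ∫⁻ r in Ioi 0, ENNReal.ofReal (4 * π * r * sinh r * radialHeat t r) = 1 := by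
  let c := 4 * π * ((8 * π ^ ((3 : ℝ) / 2))⁻¹ * t ^ (-(3 : ℝ) / 2))
  have hgauss := integral_Ioi_sq_mul_exp_neg_sq_div ht
  have hradial (r : ℝ) (hr : r ∈ Ioi 0) : ENNReal.ofReal (4 * π * r * sinh r * radialHeat t r) =
      ENNReal.ofReal (c * (r ^ 2 * exp (-(r ^ 2) / (4 * t)))) := by
    have hr0 : 0 < r := hr
    have : 0 < sinh r := sinh_pos_iff.mpr hr0
    rw [radialHeat_of_pos t hr0]
    congr 1
    simp only [c]
    field_simp
  have hnormalization : c * (2 * √π * t ^ ((3 : ℝ) / 2)) = 1 := by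
    have hπ : π ^ ((3 : ℝ) / 2) = π * √π := by
      rw [show (3 : ℝ) / 2 = 1 + 1 / 2 by norm_num, rpow_add pi_pos, rpow_one, ← sqrt_eq_rpow]
    simp only [c]
    rw [hπ, neg_div, rpow_neg ht.le]
    field_simp
    norm_num
  have hint : IntegrableOn (fun r => c * (r ^ 2 * exp (-(r ^ 2) / (4 * t)))) (Ioi 0) := by
    refine (Integrable.of_integral_ne_zero ?_).const_mul c
    rw [hgauss]
    positivity
  rw [setLIntegral_congr_fun measurableSet_Ioi hradial,
    ← ofReal_integral_eq_lintegral_ofReal hint (.of_forall fun r => by positivity),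
    integral_const_mul, hgauss, hnormalization, ENNReal.ofReal_one]

lemma lintegral_heatK {t : ℝ} (ht : 0 < t) : ∫⁻ x, ENNReal.ofReal (heatK t x) ∂ρG = 1 := by
  calc ∫⁻ x, ENNReal.ofReal (heatK t x) ∂ρG
      = ∫⁻ x, ENNReal.ofReal x.2.2⁻¹ * ENNReal.ofReal (heatProfile t (coshArg x)) ∂ρG := by
        refine lintegral_congr_ae (ae_pos_ρG.mono fun x hx => ?_)
        beta_reduce
        rw [heatK_eq_inv_mul_heatProfile t hx, ENNReal.ofReal_mul (inv_pos.mpr hx).le]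
    _ = ∫⁻ r in Ioi 0, ENNReal.ofReal (4 * π * r * sinh r) *
          ENNReal.ofReal (heatProfile t (cosh r)) :=
        lintegral_inv_height_mul_comp_coshArg (measurable_heatProfile t).ennreal_ofReal
    _ = ∫⁻ r in Ioi 0, ENNReal.ofReal (4 * π * r * sinh r * radialHeat t r) := by
        refine setLIntegral_congr_fun measurableSet_Ioi fun r hr => ?_
        have hr0 : 0 < r := hr
        have : 0 < sinh r := sinh_pos_iff.mpr hr0
        rw [heatProfile, arcosh_cosh hr0.le, ← ENNReal.ofReal_mul (by positivity)]
    _ = 1 := lintegral_Ioi_mul_radialHeat ht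

lemma integrable_heatK {t : ℝ} (ht : 0 < t) : Integrable (heatK t) ρG := by
  refine ⟨(measurable_heatK t).aestronglyMeasurable, ?_⟩
  rw [hasFiniteIntegral_iff_ofReal (ae_pos_ρG.mono fun x hx => heatK_nonneg ht hx),
    lintegral_heatK ht]
  exact ENNReal.one_lt_top

lemma integral_heatK {t : ℝ} (ht : 0 < t) : ∫ x, heatK t x ∂ρG = 1 := by
  rw [integral_eq_lintegral_of_nonneg_ae (ae_pos_ρG.mono fun x hx => heatK_nonneg ht hx)
    (measurable_heatK t).aestronglyMeasurable, lintegral_heatK ht, ENNReal.toReal_one]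

/-! ### Convolution of the heat kernel with the indicator of `R₀` -/

/-- The convolution `χ_{R₀} ∗ p_t`, written as an integral over `R₀⁻¹`. -/
def heatR0 (t : ℝ) (x : G) : ℝ := ∫ z in R0inv, heatK t (gMul z x) ∂ρG

lemma measurableSet_R0set : MeasurableSet R0set :=
  measurableSet_Icc.prod (measurableSet_Icc.prod measurableSet_Icc)

lemma measurable_gMul_gInv (x : G) : Measurable fun y => gMul x (gInv y) := by
  unfold gMul gInv
  fun_prop

lemma gMul_gInv_gMul {x z : G} (hx : 0 < x.2.2) (hz : 0 < z.2.2) :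
    gMul x (gInv (gMul z x)) = gInv z := by
  ext <;> simp only [gMul, gInv] <;> field_simp <;> ring

lemma integrable_heatK_gMul {t : ℝ} (ht : 0 < t) {x : G} (hx : 0 < x.2.2) :
    Integrable (fun z => heatK t (gMul z x)) ρG :=
  (measurePreserving_gMul_right hx).integrable_comp_of_integrable (integrable_heatK ht)

lemma integral_heatK_gMul {t : ℝ} (ht : 0 < t) {x : G} (hx : 0 < x.2.2) :
    ∫ z, heatK t (gMul z x) ∂ρG = 1 := by
  have hright := measurePreserving_gMul_right hx
  have hmap := integral_map (f := heatK t) hright.aemeasurable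
    (measurable_heatK t).aestronglyMeasurable
  rw [← hmap, hright.map_eq, integral_heatK ht]

lemma convHeat_eq_integral_gInv {f : G → ℝ} (hf : Measurable f) (t : ℝ) {x : G}
    (hx : 0 < x.2.2) :
    convHeat f t x = ∫ z, f (gInv z) * heatK t (gMul z x) ∂ρG := by
  have hright := measurePreserving_gMul_right hx
  have hmeas : Measurable fun y => f (gMul x (gInv y)) * heatK t y :=
    (hf.comp (measurable_gMul_gInv x)).mul (measurable_heatK t)
  have hmap := integral_map hright.aemeasurable hmeas.aestronglyMeasurable
  rw [hright.map_eq] at hmap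
  refine hmap.trans (integral_congr_ae (ae_pos_ρG.mono fun z hz => ?_))
  simp only [gMul_gInv_gMul hx hz]

lemma convHeat_indicator_R0set (t : ℝ) {x : G} (hx : 0 < x.2.2) :
    convHeat (R0set.indicator fun _ => 1) t x = heatR0 t x := by
  rw [convHeat_eq_integral_gInv (measurable_const.indicator measurableSet_R0set) t hx, heatR0,
    ← integral_indicator measurableSet_R0inv]
  refine integral_congr_ae (.of_forall fun z => ?_)
  by_cases hz : gInv z ∈ R0set
  · simp [hz, indicator_of_mem (show z ∈ R0inv from hz)]
  · simp [hz, indicator_of_notMem (show z ∉ R0inv from hz)]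

lemma convHeat_comp_shift (f : G → ℝ) (L t : ℝ) (x : G) :
    convHeat (f ∘ shift L) t x = convHeat f t (shift L x) := by
  have hshift (y : G) : shift L (gMul x y) = gMul (shift L x) y := by
    ext <;> simp only [shift, gMul]
    ring
  simp only [convHeat, Function.comp_apply, hshift]

lemma RLset_eq_preimage_shift (L : ℝ) : RLset L = shift L ⁻¹' R0set := by
  ext x
  simp only [RLset, R0set, shift, mem_preimage, mem_prod, mem_Icc, sub_le_iff_le_add,
    neg_le_sub_iff_le_add, add_comm (1 : ℝ)]

lemma integrable_indicator_mul_heatK {S : Set G} (hS : MeasurableSet S) {t : ℝ} (ht : 0 < t)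
    (x : G) :
    Integrable (fun y => S.indicator (fun _ => (1 : ℝ)) (gMul x (gInv y)) * heatK t y) ρG := by
  refine (integrable_heatK ht).bdd_mul (c := 1)
    ((measurable_const.indicator hS).comp (measurable_gMul_gInv x)).aestronglyMeasurable
    (.of_forall fun y => ?_)
  simpa using norm_indicator_le_norm_self (fun _ => (1 : ℝ)) (gMul x (gInv y))

lemma convHeat_fL {t : ℝ} (ht : 0 < t) (L : ℝ) {x : G} (hx : 0 < x.2.2) :
    convHeat (fL L) t x = heatR0 t (shift L x) - heatR0 t x := by
  have hRL : MeasurableSet (RLset L) := by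
    rw [RLset_eq_preimage_shift]
    exact (measurePreserving_shift L).measurable measurableSet_R0set
  have hcomp : (RLset L).indicator (fun _ => (1 : ℝ)) =
      (R0set.indicator fun _ => 1) ∘ shift L := by
    rw [RLset_eq_preimage_shift]
    exact funext fun _ => indicator_comp_right (shift L) (g := fun _ => (1 : ℝ))
  calc convHeat (fL L) t x
      = convHeat ((RLset L).indicator fun _ => 1) t x -
          convHeat (R0set.indicator fun _ => 1) t x := by
        simp only [convHeat, fL, sub_mul]
        exact integral_sub (integrable_indicator_mul_heatK hRL ht x)
          (integrable_indicator_mul_heatK measurableSet_R0set ht x)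
    _ = heatR0 t (shift L x) - heatR0 t x := by
        rw [hcomp, convHeat_comp_shift, convHeat_indicator_R0set t hx,
          convHeat_indicator_R0set t (show 0 < (shift L x).2.2 from hx)]

lemma heatK_gMul_nonneg_ae {t : ℝ} (ht : 0 < t) {x : G} (hx : 0 < x.2.2) :
    0 ≤ᵐ[ρG] fun z => heatK t (gMul z x) :=
  ae_pos_ρG.mono fun _ hz => heatK_nonneg ht (gMul_height_pos hz hx)

lemma heatR0_nonneg {t : ℝ} (ht : 0 < t) {x : G} (hx : 0 < x.2.2) : 0 ≤ heatR0 t x :=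
  setIntegral_nonneg_of_ae (heatK_gMul_nonneg_ae ht hx)

lemma heatR0_le_one {t : ℝ} (ht : 0 < t) {x : G} (hx : 0 < x.2.2) : heatR0 t x ≤ 1 :=
  (setIntegral_le_integral (integrable_heatK_gMul ht hx) (heatK_gMul_nonneg_ae ht hx)).trans_eq
    (integral_heatK_gMul ht hx)

lemma majorant_gMul_le_of_mem_R0inv {z x : G} (hz : z ∈ R0inv) (hx : 0 < x.2.2) :
    majorant (gMul z x) ≤ 12 ^ 2 * (1 + log 12) ^ 2 * majorant x := by
  have hz0 := height_pos_of_mem_R0inv hz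
  have hQ := expGauge_le_of_mem_R0inv hz
  have hlog := log_le_log (expGauge_pos hz0) hQ
  have := expGauge_pos hz0
  have := log_expGauge_nonneg hz0
  have := (majorant_pos hx).le
  refine (majorant_gMul_le hz0 hx).trans ?_
  gcongr

lemma expGauge_le_mul_of_mem_R0inv {z x : G} (hz : z ∈ R0inv) (hx : 0 < x.2.2) :
    expGauge x ≤ 12 * expGauge (gMul z x) := by
  have hz0 := height_pos_of_mem_R0inv hz
  have := expGauge_pos (gMul_height_pos hz0 hx)
  refine (expGauge_le_mul_expGauge_gMul hz0 hx).trans ?_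
  gcongr
  exact expGauge_le_of_mem_R0inv hz

lemma heatR0_le_of_expGauge_ge {t : ℝ} (ht : 0 < t) {x : G} (hx : 0 < x.2.2)
    (hQ : 72 ≤ expGauge x) :
    heatR0 t x ≤ 1296 * (12 ^ 2 * (1 + log 12) ^ 2) * ρG.real R0inv * majorant x := by
  have hpoint (z : G) (hz : z ∈ R0inv) :
      ‖heatK t (gMul z x)‖ ≤ 1296 * (12 ^ 2 * (1 + log 12) ^ 2 * majorant x) := by
    have hzx := gMul_height_pos (height_pos_of_mem_R0inv hz) hx
    have hQzx : 6 ≤ expGauge (gMul z x) := by linarith [expGauge_le_mul_of_mem_R0inv hz hx]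
    rw [norm_of_nonneg (heatK_nonneg ht hzx)]
    refine (heatK_le_majorant ht hzx hQzx).trans ?_
    gcongr
    exact majorant_gMul_le_of_mem_R0inv hz hx
  refine (le_norm_self _).trans
    ((norm_setIntegral_le_of_norm_le_const ρG_R0inv_lt_top hpoint).trans_eq ?_)
  ring

lemma exists_heatR0_le_majorant :
    ∃ C > 0, ∀ t > 0, ∀ x : G, 0 < x.2.2 → heatR0 t x ≤ C * majorant x := by
  set A := 1296 * (12 ^ 2 * (1 + log 12) ^ 2) * ρG.real R0inv
  have hA : 0 ≤ A := by positivity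
  have : 0 ≤ log 72 := log_nonneg (by norm_num)
  refine ⟨A + 72 ^ 2 * (1 + log 72) ^ 2, by positivity, fun t ht x hx => ?_⟩
  have hg := majorant_pos hx
  rcases le_total 72 (expGauge x) with hQ | hQ
  · refine (heatR0_le_of_expGauge_ge ht hx hQ).trans ?_
    gcongr
    exact le_add_of_nonneg_right (by positivity)
  · have hlow := majorant_ge_of_expGauge_le hx hQ
    rw [inv_le_iff_one_le_mul₀' (by positivity)] at hlow
    calc heatR0 t x ≤ 1 := heatR0_le_one ht hx
      _ ≤ 72 ^ 2 * (1 + log 72) ^ 2 * majorant x := hlow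
      _ ≤ _ := by
        gcongr
        exact le_add_of_nonneg_left hA

/-! ### Cancellation between the two indicators -/

lemma abs_fst_le_normG (x : G) : |x.1| ≤ normG x :=
  abs_le_of_sq_le_sq (by linarith [normG_sq x, sq_nonneg x.2.1]) (normG_nonneg x)

lemma normG_shift_le (L : ℝ) (x : G) : normG (shift L x) ≤ normG x + |L| := by
  have hcross : -(x.1 * L) ≤ normG x * |L| :=
    (neg_le_abs _).trans ((abs_mul _ _).trans_le (by gcongr; exact abs_fst_le_normG x))
  refine abs_le_of_sq_le_sq' ?_ (add_nonneg (normG_nonneg x) (abs_nonneg L)) |>.2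
  rw [normG_sq]
  simp only [shift]
  linarith [normG_sq x, sq_abs L]

lemma normG_le_normG_shift_add (L : ℝ) (x : G) : normG x ≤ normG (shift L x) + |L| := by
  simpa [shift] using normG_shift_le (-L) (shift L x)

lemma expGauge_le_two_mul_expGauge_shift {L : ℝ} {x : G} (hx : 0 < x.2.2)
    (hL : 4 * |L| ≤ normG x) : expGauge x ≤ 2 * expGauge (shift L x) := by
  have hx' : 0 < (shift L x).2.2 := hx
  have hnorm : 3 / 4 * normG x ≤ normG (shift L x) := by
    linarith [normG_le_normG_shift_add L x]
  have hsq : normG x ^ 2 ≤ 2 * normG (shift L x) ^ 2 := by nlinarith [normG_nonneg x]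
  rw [expGauge_eq_div hx, expGauge_eq_div hx', ← mul_div_assoc]
  simp only [shift] at hsq ⊢
  gcongr
  nlinarith [sq_nonneg x.2.2]

lemma normG_le_expGauge {x : G} (hx : 0 < x.2.2) (hxn : x.2.2 ≤ normG x) :
    normG x ≤ expGauge x := by
  have := normG_sq_le_height_mul_expGauge hx
  have := expGauge_pos hx
  nlinarith

lemma height_le_of_mem_R0inv {z : G} (hz : z ∈ R0inv) : z.2.2 ≤ 12 :=
  (height_le_expGauge (height_pos_of_mem_R0inv hz)).trans (expGauge_le_of_mem_R0inv hz)

lemma inv_height_le_of_mem_R0inv {z : G} (hz : z ∈ R0inv) : z.2.2⁻¹ ≤ 12 :=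
  (inv_height_le_expGauge (height_pos_of_mem_R0inv hz)).trans (expGauge_le_of_mem_R0inv hz)

lemma normG_le_of_mem_R0inv {z : G} (hz : z ∈ R0inv) : normG z ≤ 12 := by
  have hz0 := height_pos_of_mem_R0inv hz
  refine abs_le_of_sq_le_sq' ?_ (by norm_num) |>.2
  calc normG z ^ 2 ≤ z.2.2 * expGauge z := normG_sq_le_height_mul_expGauge hz0
    _ ≤ 12 * 12 := mul_le_mul (height_le_of_mem_R0inv hz) (expGauge_le_of_mem_R0inv hz)
        (expGauge_pos hz0).le (by norm_num)
    _ = 12 ^ 2 := by norm_num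

lemma coshArg_gMul_shift_sub {z x : G} (hz : 0 < z.2.2) (hx : 0 < x.2.2) (L : ℝ) :
    coshArg (gMul z (shift L x)) - coshArg (gMul z x) =
      L / x.2.2 * (z.2.2 * L / 2 - z.1 - z.2.2 * x.1) := by
  simp only [coshArg, gMul, shift]
  field_simp
  ring

lemma abs_coshArg_gMul_shift_sub_le {z x : G} (hz : z ∈ R0inv) (hx : 0 < x.2.2) {L : ℝ}
    (hL : |L| ≤ normG x) (hx1 : 1 ≤ normG x) :
    |coshArg (gMul z (shift L x)) - coshArg (gMul z x)| ≤ 36 * (|L| / x.2.2 * normG x) := by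
  have hz0 := height_pos_of_mem_R0inv hz
  have hfactor : |z.2.2 * L / 2 - z.1 - z.2.2 * x.1| ≤ 36 * normG x := by
    have hzx (y : ℝ) (hy : |y| ≤ normG x) : |z.2.2 * y| ≤ 12 * normG x := by
      rw [abs_mul, abs_of_pos hz0]
      gcongr
      exact height_le_of_mem_R0inv hz
    have hzL := abs_le.mp (hzx L hL)
    have hzx1 := abs_le.mp (hzx x.1 (abs_fst_le_normG x))
    have hz1 := abs_le.mp ((abs_fst_le_normG z).trans (normG_le_of_mem_R0inv hz))
    rw [abs_le]
    constructor <;> linarith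
  rw [coshArg_gMul_shift_sub hz0 hx, abs_mul, abs_div, abs_of_pos hx, mul_left_comm]
  gcongr

lemma one_add_log_le_mul {k Q : ℝ} (hk : 1 ≤ k) (hQ : k ≤ Q) :
    1 + log Q ≤ (1 + log k) * (1 + log (Q / k)) := by
  have hk0 : 0 < k := one_pos.trans_le hk
  have hdiv : 0 ≤ log (Q / k) := log_nonneg ((one_le_div hk0).mpr hQ)
  have hadd : log Q = log k + log (Q / k) := by
    rw [← log_mul hk0.ne' (div_pos (hk0.trans_le hQ) hk0).ne', mul_div_cancel₀ Q hk0.ne']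
  nlinarith [mul_nonneg (log_nonneg hk) hdiv]

lemma abs_heatProfile_gMul_shift_sub_le {t : ℝ} (ht : 0 < t) {z x : G} (hz : z ∈ R0inv)
    (hx : 0 < x.2.2) {L : ℝ} (hQ : 144 ≤ expGauge x) (hL : 4 * |L| ≤ normG x) :
    |heatProfile t (coshArg (gMul z (shift L x))) - heatProfile t (coshArg (gMul z x))| ≤
      21888 * 48 ^ 2 * (1 + log 24) ^ 2 / (expGauge x * (1 + log (expGauge x))) ^ 2 *
        |coshArg (gMul z (shift L x)) - coshArg (gMul z x)| := by
  set m := expGauge x / 48 with hm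
  have hm3 : 3 ≤ m := by linarith
  have hQzx : m ≤ coshArg (gMul z x) := by
    have : expGauge x ≤ 12 * (2 * coshArg (gMul z x)) := expGauge_le_mul_of_mem_R0inv hz hx
    linarith
  have hQzs : m ≤ coshArg (gMul z (shift L x)) := by
    have hshift := expGauge_le_two_mul_expGauge_shift hx hL
    have : expGauge (shift L x) ≤ 12 * (2 * coshArg (gMul z (shift L x))) :=
      expGauge_le_mul_of_mem_R0inv hz hx
    linarith
  have hlog : 1 + log (expGauge x) ≤ (1 + log 24) * (1 + log (2 * m)) := by
    rw [show 2 * m = expGauge x / 24 by rw [hm]; ring]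
    exact one_add_log_le_mul (by norm_num) (by linarith)
  have hlog_nonneg := log_expGauge_nonneg hx
  have hmlog := one_add_log_two_mul_pos hm3
  refine (abs_heatProfile_sub_le ht hm3 hQzs hQzx).trans ?_
  gcongr ?_ * _
  rw [div_le_div_iff₀ (by positivity) (by positivity)]
  calc 21888 * (expGauge x * (1 + log (expGauge x))) ^ 2
      ≤ 21888 * (48 * m * ((1 + log 24) * (1 + log (2 * m)))) ^ 2 := by
        gcongr
        exact (mul_div_cancel₀ _ (by norm_num)).ge
    _ = 21888 * 48 ^ 2 * (1 + log 24) ^ 2 * (m * (1 + log (2 * m))) ^ 2 := by ring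

lemma abs_heatK_gMul_shift_sub_le {t : ℝ} (ht : 0 < t) {z x : G} (hz : z ∈ R0inv)
    (hx : 0 < x.2.2) {L : ℝ} (hx144 : 144 ≤ normG x) (hL : 4 * |L| ≤ normG x)
    (hxn : x.2.2 ≤ normG x) :
    |heatK t (gMul z (shift L x)) - heatK t (gMul z x)| ≤
      432 * (21888 * 48 ^ 2 * (1 + log 24) ^ 2) * (|L| / normG x * majorant x) := by
  have hz0 := height_pos_of_mem_R0inv hz
  have hx' : 0 < (shift L x).2.2 := hx
  have hQ0 := expGauge_pos hx
  have hlog := log_expGauge_nonneg hx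
  set K := 21888 * 48 ^ 2 * (1 + log 24) ^ 2
  have hprofile := abs_heatProfile_gMul_shift_sub_le ht hz hx
    (hx144.trans (normG_le_expGauge hx hxn)) hL
  have hcosh := abs_coshArg_gMul_shift_sub_le hz hx (L := L) (by linarith [abs_nonneg L])
    (by linarith)
  have hheight : (z.2.2 * x.2.2)⁻¹ ≤ 12 * x.2.2⁻¹ := by
    rw [mul_inv]
    gcongr
    exact inv_height_le_of_mem_R0inv hz
  calc |heatK t (gMul z (shift L x)) - heatK t (gMul z x)|
      = (z.2.2 * x.2.2)⁻¹ * |heatProfile t (coshArg (gMul z (shift L x))) -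
          heatProfile t (coshArg (gMul z x))| := by
        rw [heatK_eq_inv_mul_heatProfile t (gMul_height_pos hz0 hx),
          heatK_eq_inv_mul_heatProfile t (gMul_height_pos hz0 hx')]
        simp only [gMul, shift]
        rw [← mul_sub, abs_mul, abs_of_pos (by positivity)]
    _ ≤ 12 * x.2.2⁻¹ * (K / (expGauge x * (1 + log (expGauge x))) ^ 2 *
          (36 * (|L| / x.2.2 * normG x))) := by
        gcongr
        exact hprofile.trans (by gcongr)
    _ = 432 * K * (|L| * (normG x / (x.2.2 * expGauge x)) * majorant x) := by
        rw [majorant]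
        field_simp
        ring
    _ ≤ 432 * K * (|L| * (1 / normG x) * majorant x) := by
        have := (majorant_pos hx).le
        have hnorm : normG x / (x.2.2 * expGauge x) ≤ 1 / normG x := by
          rw [div_le_div_iff₀ (by positivity) (by linarith), one_mul, ← sq]
          exact normG_sq_le_height_mul_expGauge hx
        gcongr
    _ = 432 * K * (|L| / normG x * majorant x) := by rw [mul_one_div]

lemma exists_abs_convHeat_fL_le_div_mul_majorant :
    ∃ C > 0, ∀ L ≥ 36, ∀ t > 0, ∀ x : G, 0 < x.2.2 → 4 * L ≤ normG x → x.2.2 ≤ normG x →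
      |convHeat (fL L) t x| ≤ C * (L / normG x * majorant x) := by
  set K := 432 * (21888 * 48 ^ 2 * (1 + log 24) ^ 2)
  refine ⟨K * ρG.real R0inv + 1, by positivity, fun L hL t ht x hx hLx hxn => ?_⟩
  have hx' : 0 < (shift L x).2.2 := hx
  have hL0 : 0 ≤ L := by linarith
  have hg := majorant_pos hx
  have hn := normG_nonneg x
  have hpoint (z : G) (hz : z ∈ R0inv) :
      ‖heatK t (gMul z (shift L x)) - heatK t (gMul z x)‖ ≤ K * (L / normG x * majorant x) := by
    simpa only [abs_of_nonneg hL0, norm_eq_abs] using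
      abs_heatK_gMul_shift_sub_le (L := L) ht hz hx (by linarith) (by rwa [abs_of_nonneg hL0]) hxn
  rw [convHeat_fL ht L hx, heatR0, heatR0, ← integral_sub
    (integrable_heatK_gMul ht hx').integrableOn (integrable_heatK_gMul ht hx).integrableOn]
  calc |∫ z in R0inv, heatK t (gMul z (shift L x)) - heatK t (gMul z x) ∂ρG|
      ≤ K * (L / normG x * majorant x) * ρG.real R0inv :=
        norm_setIntegral_le_of_norm_le_const ρG_R0inv_lt_top hpoint
    _ = K * ρG.real R0inv * (L / normG x * majorant x) := by ring
    _ ≤ (K * ρG.real R0inv + 1) * (L / normG x * majorant x) := by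
        gcongr
        exact (lt_add_one _).le

/-! ### Integrals of the majorant -/

/-- The majorant in the coordinates `u = log a`, `s = |x|²`. -/
def coordMajorant (u s : ℝ) : ℝ :=
  ((1 + exp (2 * u) + s) * (1 + (log (1 + exp (2 * u) + s) - u)) ^ 2)⁻¹

lemma majorant_eq_coordMajorant {x : G} (hx : 0 < x.2.2) :
    majorant x = coordMajorant (log x.2.2) (normG x ^ 2) := by
  have hsum : 0 < 1 + x.2.2 ^ 2 + normG x ^ 2 := by positivity
  rw [majorant, coordMajorant, height_mul_expGauge hx, expGauge_eq_div hx,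
    log_div hsum.ne' hx.ne', two_mul, exp_add, exp_log hx, ← sq]

lemma measurable_coordMajorant : Measurable (Function.uncurry coordMajorant) := by
  unfold coordMajorant Function.uncurry
  fun_prop

lemma abs_le_log_one_add_exp_add_sub {u s : ℝ} (hs : 0 ≤ s) :
    |u| ≤ log (1 + exp (2 * u) + s) - u := by
  have hexp := exp_pos (2 * u)
  have hnonneg : 0 ≤ log (1 + exp (2 * u) + s) := log_nonneg (by linarith)
  have htwo : 2 * u ≤ log (1 + exp (2 * u) + s) :=
    (le_log_iff_exp_le (by linarith)).mpr (by linarith)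
  rw [abs_le]
  constructor <;> linarith

lemma exp_mul_coordMajorant_le {u s : ℝ} (hs : 0 ≤ s) :
    exp (2 * u) * coordMajorant u s ≤ (1 + u ^ 2)⁻¹ := by
  have hlog := abs_le_log_one_add_exp_add_sub (u := u) hs
  have habs := abs_nonneg u
  have hsq : 1 + u ^ 2 ≤ (1 + (log (1 + exp (2 * u) + s) - u)) ^ 2 := by
    nlinarith [sq_abs u]
  rw [coordMajorant, mul_inv, ← mul_assoc]
  refine (mul_le_of_le_one_left (by positivity) ?_).trans (inv_anti₀ (by positivity) hsq)
  rw [← div_eq_mul_inv]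
  exact div_le_one_of_le₀ (by linarith) (by positivity)

lemma le_half_log_one_add {u s : ℝ} (hu : exp (2 * u) ≤ s) : u ≤ log (1 + s) / 2 := by
  have hexp := exp_pos (2 * u)
  have hlog : 2 * u ≤ log (1 + s) := (le_log_iff_exp_le (by linarith)).mpr (by linarith)
  linarith

lemma coordMajorant_le_mul_rpow {u s : ℝ} (hu : exp (2 * u) ≤ s) :
    coordMajorant u s ≤ (1 + s)⁻¹ * (1 + log (1 + s) - u) ^ (-2 : ℝ) := by
  have hexp := exp_pos (2 * u)
  have hlog : log (1 + s) ≤ log (1 + exp (2 * u) + s) := log_le_log (by linarith) (by linarith)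
  have hlog_nonneg : 0 ≤ log (1 + s) := log_nonneg (by linarith)
  have hpos : 0 < 1 + log (1 + s) - u := by linarith [le_half_log_one_add hu]
  have hs : 0 < 1 + s := by linarith
  rw [rpow_neg hpos.le, rpow_two, ← mul_inv, coordMajorant]
  gcongr <;> linarith

lemma lintegral_Ioi_ofReal_rpow {a c : ℝ} (ha : a < -1) (hc : 0 < c) :
    ∫⁻ t in Ioi c, ENNReal.ofReal (t ^ a) = ENNReal.ofReal (-c ^ (a + 1) / (a + 1)) := by
  rw [← integral_Ioi_rpow_of_lt ha hc,
    ofReal_integral_eq_lintegral_ofReal (integrableOn_Ioi_rpow_of_lt ha hc)]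
  exact (ae_restrict_mem measurableSet_Ioi).mono fun t ht => rpow_nonneg (hc.le.trans ht.le) a

lemma setLIntegral_Iic_comp_sub_left (c l : ℝ) (φ : ℝ → ℝ≥0∞) :
    ∫⁻ u in Iic l, φ (c - u) = ∫⁻ v in Ioi (c - l), φ v := by
  have hpre : (fun u => c - u) ⁻¹' Ici (c - l) = Iic l := by
    ext u
    simp
  rw [← hpre, (Measure.measurePreserving_sub_left volume c).setLIntegral_comp_preimage_emb
    (MeasurableEquiv.subLeft c).measurableEmbedding, setLIntegral_congr Ioi_ae_eq_Ici.symm]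

lemma setLIntegral_coordMajorant_le {s : ℝ} (hs : 0 < s) :
    ∫⁻ u in {u | exp (2 * u) ≤ s}, ENNReal.ofReal (coordMajorant u s) ≤
      ENNReal.ofReal (2 * ((1 + s) * (1 + log (1 + s)))⁻¹) := by
  set l := log (1 + s)
  have hl : 0 < l := log_pos (by linarith)
  have hbound (u : ℝ) (hu : u ∈ {u | exp (2 * u) ≤ s}) :
      ENNReal.ofReal (coordMajorant u s) ≤
        ENNReal.ofReal (1 + s)⁻¹ * ENNReal.ofReal ((1 + l - u) ^ (-2 : ℝ)) := by
    rw [← ENNReal.ofReal_mul (by positivity)]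
    exact ENNReal.ofReal_le_ofReal (coordMajorant_le_mul_rpow hu)
  calc ∫⁻ u in {u | exp (2 * u) ≤ s}, ENNReal.ofReal (coordMajorant u s)
      ≤ ∫⁻ u in Iic (l / 2),
          ENNReal.ofReal (1 + s)⁻¹ * ENNReal.ofReal ((1 + l - u) ^ (-2 : ℝ)) :=
        (setLIntegral_mono' (measurableSet_le (by fun_prop) (by fun_prop)) hbound).trans
          (lintegral_mono_set fun u hu => le_half_log_one_add hu)
    _ = ENNReal.ofReal (1 + s)⁻¹ * ENNReal.ofReal (1 + l - l / 2)⁻¹ := by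
        rw [lintegral_const_mul _ (by fun_prop),
          setLIntegral_Iic_comp_sub_left (1 + l) (l / 2) fun v => ENNReal.ofReal (v ^ (-2 : ℝ)),
          lintegral_Ioi_ofReal_rpow (by norm_num) (by linarith)]
        norm_num [rpow_neg_one]
    _ ≤ ENNReal.ofReal (2 * ((1 + s) * (1 + l))⁻¹) := by
        rw [← ENNReal.ofReal_mul (by positivity), mul_inv, mul_left_comm]
        gcongr
        rw [← div_eq_mul_inv, inv_le_comm₀ (by linarith) (by positivity), inv_div]
        linarith

lemma height_le_normG_iff {x : G} (hx : 0 < x.2.2) :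
    x.2.2 ≤ normG x ↔ exp (2 * log x.2.2) ≤ normG x ^ 2 := by
  rw [two_mul, exp_add, exp_log hx, ← sq, pow_le_pow_iff_left₀ hx.le (normG_nonneg x) two_ne_zero]

lemma setLIntegral_height_le_normG_le {w : ℝ → ℝ≥0∞} (hw : Measurable w) :
    ∫⁻ x in {x | x.2.2 ≤ normG x}, w (normG x ^ 2) * ENNReal.ofReal (majorant x) ∂ρG ≤
      ENNReal.ofReal (2 * π) *
        ∫⁻ s in Ioi 0, w s * ENNReal.ofReal ((1 + s) * (1 + log (1 + s)))⁻¹ := by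
  have hcoord := measurable_coordMajorant
  let S : Set (ℝ × ℝ) := {p | exp (2 * p.1) ≤ p.2}
  let φ : ℝ → ℝ → ℝ≥0∞ := fun u s =>
    S.indicator (fun p => w p.2 * ENNReal.ofReal (Function.uncurry coordMajorant p)) (u, s)
  have hφ : Measurable (Function.uncurry φ) :=
    Measurable.indicator (by fun_prop) (measurableSet_le (by fun_prop) (by fun_prop))
  have hregion : MeasurableSet {x : G | x.2.2 ≤ normG x} :=
    measurableSet_le (by fun_prop) measurable_normG
  have hinner (s : ℝ) (hs : s ∈ Ioi 0) :
      ∫⁻ u, φ u s ≤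
        ENNReal.ofReal 2 * (w s * ENNReal.ofReal ((1 + s) * (1 + log (1 + s)))⁻¹) := by
    calc ∫⁻ u, φ u s
        = w s * ∫⁻ u in {u | exp (2 * u) ≤ s}, ENNReal.ofReal (coordMajorant u s) := by
          rw [← lintegral_const_mul _ (by unfold coordMajorant; fun_prop),
            ← lintegral_indicator (measurableSet_le (by fun_prop) (by fun_prop))]
          rfl
      _ ≤ w s * ENNReal.ofReal (2 * ((1 + s) * (1 + log (1 + s)))⁻¹) := by
          gcongr
          exact setLIntegral_coordMajorant_le hs
      _ = _ := by rw [ENNReal.ofReal_mul zero_le_two, mul_left_comm]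
  calc ∫⁻ x in {x | x.2.2 ≤ normG x}, w (normG x ^ 2) * ENNReal.ofReal (majorant x) ∂ρG
      = ∫⁻ x, φ (log x.2.2) (normG x ^ 2) ∂ρG := by
        rw [← lintegral_indicator hregion]
        refine lintegral_congr_ae (ae_pos_ρG.mono fun x hx => ?_)
        simp only [φ, S, indicator, mem_ofPred_eq, height_le_normG_iff hx,
          majorant_eq_coordMajorant hx, Function.uncurry_apply_pair]
    _ = ENNReal.ofReal π * ∫⁻ s in Ioi 0, ∫⁻ u, φ u s := by
        rw [lintegral_comp_log_normG_sq hφ, lintegral_lintegral_swap hφ.aemeasurable]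
    _ ≤ ENNReal.ofReal π * ∫⁻ s in Ioi 0,
          ENNReal.ofReal 2 * (w s * ENNReal.ofReal ((1 + s) * (1 + log (1 + s)))⁻¹) := by
        gcongr ENNReal.ofReal π * ?_
        exact setLIntegral_mono' measurableSet_Ioi hinner
    _ = _ := by
        rw [lintegral_const_mul _ (by fun_prop), ← mul_assoc, ← ENNReal.ofReal_mul pi_nonneg,
          mul_comm π]

lemma majorant_le_inv_one_add_log_sq_div {x : G} (hx : 0 < x.2.2) :
    majorant x ≤ (1 + log x.2.2 ^ 2)⁻¹ / exp (2 * log x.2.2) := by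
  rw [majorant_eq_coordMajorant hx, le_div_iff₀' (exp_pos _)]
  exact exp_mul_coordMajorant_le (sq_nonneg _)

lemma setLIntegral_normG_lt_two_mul_height_le :
    ∫⁻ x in {x | normG x < 2 * x.2.2}, ENNReal.ofReal (majorant x) ∂ρG ≤
      ENNReal.ofReal (4 * π ^ 2) := by
  let S : Set (ℝ × ℝ) := {p | p.2 ≤ 4 * exp (2 * p.1)}
  let φ : ℝ → ℝ → ℝ≥0∞ := fun u s =>
    S.indicator (fun p => ENNReal.ofReal ((1 + p.1 ^ 2)⁻¹ / exp (2 * p.1))) (u, s)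
  have hφ : Measurable (Function.uncurry φ) :=
    Measurable.indicator (by fun_prop) (measurableSet_le (by fun_prop) (by fun_prop))
  have hregion : MeasurableSet {x : G | normG x < 2 * x.2.2} :=
    measurableSet_lt measurable_normG (by fun_prop)
  have hpoint (x : G) (hx : 0 < x.2.2) (hxn : normG x < 2 * x.2.2) :
      ENNReal.ofReal (majorant x) ≤ φ (log x.2.2) (normG x ^ 2) := by
    have hmem : (log x.2.2, normG x ^ 2) ∈ S := by
      change normG x ^ 2 ≤ 4 * exp (2 * log x.2.2)
      rw [two_mul, exp_add, exp_log hx]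
      nlinarith [normG_nonneg x]
    rw [show φ _ _ = _ from indicator_of_mem hmem _]
    exact ENNReal.ofReal_le_ofReal (majorant_le_inv_one_add_log_sq_div hx)
  have hinner (u : ℝ) : ∫⁻ s in Ioi 0, φ u s = ENNReal.ofReal (4 * (1 + u ^ 2)⁻¹) := by
    calc ∫⁻ s in Ioi 0, φ u s
        = ∫⁻ s in Ioi 0, (Iic (4 * exp (2 * u))).indicator
            (fun _ => ENNReal.ofReal ((1 + u ^ 2)⁻¹ / exp (2 * u))) s := rfl
      _ = ENNReal.ofReal (4 * (1 + u ^ 2)⁻¹) := by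
          rw [lintegral_indicator_const measurableSet_Iic,
            Measure.restrict_apply measurableSet_Iic, Iic_inter_Ioi, Real.volume_Ioc,
            ← ENNReal.ofReal_mul (by positivity)]
          congr 1
          field_simp
          ring
  calc ∫⁻ x in {x | normG x < 2 * x.2.2}, ENNReal.ofReal (majorant x) ∂ρG
      ≤ ∫⁻ x, φ (log x.2.2) (normG x ^ 2) ∂ρG :=
        (setLIntegral_mono_ae' hregion (ae_pos_ρG.mono hpoint)).trans
          (setLIntegral_le_lintegral _ _)
    _ = ENNReal.ofReal π * ∫⁻ u, ENNReal.ofReal (4 * (1 + u ^ 2)⁻¹) := by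
        simp_rw [lintegral_comp_log_normG_sq hφ, hinner]
    _ = ENNReal.ofReal (4 * π ^ 2) := by
        rw [← ofReal_integral_eq_lintegral_ofReal (integrable_inv_one_add_sq.const_mul 4)
          (.of_forall fun u => by positivity), integral_const_mul, integral_univ_inv_one_add_sq,
          ← ENNReal.ofReal_mul pi_nonneg]
        congr 1
        ring

lemma hasDerivAt_log_one_add_log_one_add {s : ℝ} (hs : 0 ≤ s) :
    HasDerivAt (fun s => log (1 + log (1 + s))) ((1 + s) * (1 + log (1 + s)))⁻¹ s := by
  have hlog : 0 ≤ log (1 + s) := log_nonneg (by linarith)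
  have hinner : HasDerivAt (fun s => 1 + log (1 + s)) (1 / (1 + s)) s :=
    (((hasDerivAt_id' s).const_add 1).log (by linarith)).const_add 1
  convert hinner.log (by linarith) using 1
  rw [one_div, mul_inv, div_eq_mul_inv]

lemma setLIntegral_Ioc_inv_mul_log {T : ℝ} (hT : 0 ≤ T) :
    ∫⁻ s in Ioc 0 T, ENNReal.ofReal ((1 + s) * (1 + log (1 + s)))⁻¹ =
      ENNReal.ofReal (log (1 + log (1 + T))) := by
  have hpos (s : ℝ) (hs : 0 ≤ s) : 0 < (1 + s) * (1 + log (1 + s)) := by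
    have := log_nonneg (show 1 ≤ 1 + s by linarith)
    positivity
  have hcont : ContinuousOn (fun s => ((1 + s) * (1 + log (1 + s)))⁻¹) (uIcc 0 T) := by
    rw [uIcc_of_le hT]
    refine ContinuousOn.inv₀ ?_ fun s hs => (hpos s hs.1).ne'
    refine ContinuousOn.mul (by fun_prop) (continuousOn_const.add ?_)
    refine ContinuousOn.log (by fun_prop) ?_
    intro s hs
    linarith [hs.1]
  have hint := hcont.intervalIntegrable (μ := volume)
  have hftc := intervalIntegral.integral_eq_sub_of_hasDerivAt (fun s hs =>
    hasDerivAt_log_one_add_log_one_add (by rw [uIcc_of_le hT] at hs; exact hs.1)) hint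
  rw [intervalIntegral.integral_of_le hT] at hftc
  rw [← ofReal_integral_eq_lintegral_ofReal hint.1, hftc]
  · simp
  · exact (ae_restrict_mem measurableSet_Ioc).mono fun s hs => inv_nonneg.mpr (hpos s hs.1.le).le

lemma setLIntegral_indicator_mul {α : Type*} [MeasurableSpace α] {μ : Measure α} {S : Set α}
    (hS : MeasurableSet S) (T : Set α) (w φ : α → ℝ≥0∞) :
    ∫⁻ s in T, S.indicator w s * φ s ∂μ = ∫⁻ s in S ∩ T, w s * φ s ∂μ := by
  rw [← setLIntegral_indicator hS]
  exact lintegral_congr fun s => (indicator_mul_left S w φ).symm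

lemma setLIntegral_height_le_normG_lt_le (R : ℝ) :
    ∫⁻ x in {x | x.2.2 ≤ normG x ∧ normG x < R}, ENNReal.ofReal (majorant x) ∂ρG ≤
      ENNReal.ofReal (2 * π * log (1 + log (1 + R ^ 2))) := by
  let w : ℝ → ℝ≥0∞ := (Iic (R ^ 2)).indicator 1
  have hw : Measurable w := measurable_one.indicator measurableSet_Iic
  have hball : MeasurableSet {x | normG x < R} := measurableSet_lt measurable_normG (by fun_prop)
  have hpoint (x : G) (hx : x ∈ {x | x.2.2 ≤ normG x ∧ normG x < R}) :
      ENNReal.ofReal (majorant x) ≤ w (normG x ^ 2) * ENNReal.ofReal (majorant x) := by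
    have hmem : normG x ^ 2 ∈ Iic (R ^ 2) := pow_le_pow_left₀ (normG_nonneg x) hx.2.le 2
    rw [show w _ = _ from indicator_of_mem hmem _, Pi.one_apply, one_mul]
  have hregion : MeasurableSet {x : G | x.2.2 ≤ normG x ∧ normG x < R} :=
    (measurableSet_le (by fun_prop) measurable_normG).inter hball
  calc ∫⁻ x in {x | x.2.2 ≤ normG x ∧ normG x < R}, ENNReal.ofReal (majorant x) ∂ρG
      ≤ ∫⁻ x in {x | x.2.2 ≤ normG x}, w (normG x ^ 2) * ENNReal.ofReal (majorant x) ∂ρG :=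
        (setLIntegral_mono' hregion hpoint).trans (lintegral_mono_set fun x hx => hx.1)
    _ ≤ ENNReal.ofReal (2 * π) *
          ∫⁻ s in Ioi 0, w s * ENNReal.ofReal ((1 + s) * (1 + log (1 + s)))⁻¹ :=
        setLIntegral_height_le_normG_le hw
    _ = ENNReal.ofReal (2 * π) *
          ∫⁻ s in Ioc 0 (R ^ 2), ENNReal.ofReal ((1 + s) * (1 + log (1 + s)))⁻¹ := by
        simp only [w, setLIntegral_indicator_mul measurableSet_Iic, Iic_inter_Ioi, Pi.one_apply,
          one_mul]
    _ = ENNReal.ofReal (2 * π * log (1 + log (1 + R ^ 2))) := by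
        rw [setLIntegral_Ioc_inv_mul_log (sq_nonneg R), ← ENNReal.ofReal_mul (by positivity)]

lemma div_sqrt_mul_inv_le {L s : ℝ} (hL : 0 ≤ L) (hs : 0 < s) :
    L / √s * ((1 + s) * (1 + log (1 + s)))⁻¹ ≤ L * s ^ (-(3 / 2) : ℝ) := by
  have hlog := log_nonneg (show 1 ≤ 1 + s by linarith)
  have hprod : s ≤ (1 + s) * (1 + log (1 + s)) := by nlinarith
  have hpow : s ^ (-(3 / 2) : ℝ) = (√s)⁻¹ * s⁻¹ := by
    rw [sqrt_eq_rpow, ← rpow_neg_one s, ← rpow_neg hs.le, ← rpow_add hs]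
    norm_num
  rw [hpow, div_eq_mul_inv, mul_assoc]
  gcongr

/-- The region far from both rectangles and outside a cone around the vertical axis, where the two
indicators cancel. -/
def farRegion (L : ℝ) : Set G := {x | 4 * L ≤ normG x ∧ x.2.2 ≤ normG x}

lemma measurableSet_farRegion (L : ℝ) : MeasurableSet (farRegion L) :=
  (measurableSet_le (by fun_prop) measurable_normG).inter
    (measurableSet_le (by fun_prop) measurable_normG)

lemma setLIntegral_farRegion_div_normG_mul_majorant_le {L : ℝ} (hL : 0 < L) :
    ∫⁻ x in farRegion L, ENNReal.ofReal (L / normG x * majorant x) ∂ρG ≤ ENNReal.ofReal π := by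
  let w : ℝ → ℝ≥0∞ := (Ici ((4 * L) ^ 2)).indicator fun s => ENNReal.ofReal (L / √s)
  have hw : Measurable w := Measurable.indicator (by fun_prop) measurableSet_Ici
  have hpoint (x : G) (hx : x ∈ farRegion L) :
      ENNReal.ofReal (L / normG x * majorant x) =
        w (normG x ^ 2) * ENNReal.ofReal (majorant x) := by
    have hmem : normG x ^ 2 ∈ Ici ((4 * L) ^ 2) := pow_le_pow_left₀ (by positivity) hx.1 2
    rw [show w _ = _ from indicator_of_mem hmem _, sqrt_sq (normG_nonneg x),
      ENNReal.ofReal_mul (div_nonneg hL.le (normG_nonneg x))]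
  have htail : ∫⁻ s in Ioi ((4 * L) ^ 2), ENNReal.ofReal (L * s ^ (-(3 / 2) : ℝ)) =
      ENNReal.ofReal (1 / 2) := by
    simp_rw [ENNReal.ofReal_mul hL.le]
    rw [lintegral_const_mul _ (by fun_prop), lintegral_Ioi_ofReal_rpow (by norm_num)
      (by positivity), ← ENNReal.ofReal_mul hL.le, show (-(3 / 2) + 1 : ℝ) = -(1 / 2) by norm_num,
      rpow_neg (by positivity), ← sqrt_eq_rpow, sqrt_sq (by positivity)]
    congr 1
    field_simp
    norm_num
  calc ∫⁻ x in farRegion L, ENNReal.ofReal (L / normG x * majorant x) ∂ρG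
      ≤ ∫⁻ x in {x | x.2.2 ≤ normG x}, w (normG x ^ 2) * ENNReal.ofReal (majorant x) ∂ρG :=
        (setLIntegral_congr_fun (measurableSet_farRegion L) hpoint).trans_le
          (lintegral_mono_set fun x hx => hx.2)
    _ ≤ ENNReal.ofReal (2 * π) *
          ∫⁻ s in Ioi 0, w s * ENNReal.ofReal ((1 + s) * (1 + log (1 + s)))⁻¹ :=
        setLIntegral_height_le_normG_le hw
    _ ≤ ENNReal.ofReal (2 * π) *
          ∫⁻ s in Ioi ((4 * L) ^ 2), ENNReal.ofReal (L * s ^ (-(3 / 2) : ℝ)) := by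
        gcongr ENNReal.ofReal (2 * π) * ?_
        rw [setLIntegral_indicator_mul measurableSet_Ici, setLIntegral_congr Ioi_ae_eq_Ici]
        refine (setLIntegral_mono' (measurableSet_Ici.inter measurableSet_Ioi) fun s hs => ?_).trans
          (lintegral_mono_set inter_subset_left)
        rw [← ENNReal.ofReal_mul (by positivity)]
        exact ENNReal.ofReal_le_ofReal (div_sqrt_mul_inv_le hL.le hs.2)
    _ = ENNReal.ofReal π := by
        rw [htail, ← ENNReal.ofReal_mul (by positivity)]
        congr 1
        ring

/-- The complement of the region in which the two indicators cancel: points within `R` of the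
vertical axis, together with the cone `|x| < 2a` around that axis. -/
def nearRegion (R : ℝ) : Set G := {x | normG x < R ∨ normG x < 2 * x.2.2}

lemma measurableSet_nearRegion (R : ℝ) : MeasurableSet (nearRegion R) :=
  (measurableSet_lt measurable_normG (by fun_prop)).union
    (measurableSet_lt measurable_normG (by fun_prop))

lemma setLIntegral_nearRegion_le (R : ℝ) :
    ∫⁻ x in nearRegion R, ENNReal.ofReal (majorant x) ∂ρG ≤
      ENNReal.ofReal (4 * π ^ 2 + 2 * π * log (1 + log (1 + R ^ 2))) := by
  have hlog : 0 ≤ log (1 + R ^ 2) := log_nonneg (by linarith [sq_nonneg R])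
  have hloglog : 0 ≤ log (1 + log (1 + R ^ 2)) := log_nonneg (by linarith)
  have hsub : ∀ᵐ x ∂ρG, x ∈ nearRegion R →
      x ∈ {x | normG x < 2 * x.2.2} ∪ {x | x.2.2 ≤ normG x ∧ normG x < R} := by
    refine ae_pos_ρG.mono fun x hx hmem => hmem.elim (fun hR => ?_) Or.inl
    rcases le_total x.2.2 (normG x) with h | h
    · exact Or.inr ⟨h, hR⟩
    · exact Or.inl (show normG x < 2 * x.2.2 by linarith)
  rw [ENNReal.ofReal_add (by positivity) (by positivity)]
  exact (lintegral_mono_set' hsub).trans ((lintegral_union_le _ _ _).trans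
    (add_le_add setLIntegral_normG_lt_two_mul_height_le (setLIntegral_height_le_normG_lt_le R)))

/-! ### The maximal function of `f_L` -/

lemma maxHeat_le {f : G → ℝ} {x : G} {b : ℝ} (h : ∀ t > 0, |convHeat f t x| ≤ b) :
    maxHeat f x ≤ ENNReal.ofReal b :=
  iSup₂_le fun t ht => ENNReal.ofReal_le_ofReal (h t ht)

lemma exists_lintegral_farRegion_maxHeat_fL_le :
    ∃ C > 0, ∀ L ≥ 36, ∫⁻ x in farRegion L, maxHeat (fL L) x ∂ρG ≤ ENNReal.ofReal C := by
  obtain ⟨C, hC, hconv⟩ := exists_abs_convHeat_fL_le_div_mul_majorant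
  refine ⟨C * π, by positivity, fun L hL => ?_⟩
  have hpoint (x : G) (hx : 0 < x.2.2) (hfar : x ∈ farRegion L) :
      maxHeat (fL L) x ≤ ENNReal.ofReal C * ENNReal.ofReal (L / normG x * majorant x) := by
    rw [← ENNReal.ofReal_mul hC.le]
    exact maxHeat_le fun t ht => hconv L hL t ht x hx hfar.1 hfar.2
  have hmeas : Measurable fun x => ENNReal.ofReal (L / normG x * majorant x) := by
    have := measurable_normG
    have := measurable_majorant
    fun_prop
  refine (setLIntegral_mono_ae' (measurableSet_farRegion L) (ae_pos_ρG.mono hpoint)).trans ?_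
  rw [lintegral_const_mul _ hmeas, ENNReal.ofReal_mul hC.le]
  gcongr
  exact setLIntegral_farRegion_div_normG_mul_majorant_le (by linarith)

lemma mem_nearRegion_of_notMem_farRegion {L : ℝ} (hL : 0 < L) {x : G} (hx : x ∉ farRegion L) :
    x ∈ nearRegion (5 * L) ∧ shift L x ∈ nearRegion (5 * L) := by
  have hshift := normG_shift_le L x
  rw [abs_of_pos hL] at hshift
  have := normG_nonneg x
  rcases lt_or_ge (normG x) (4 * L) with hnear | hfar
  · exact ⟨Or.inl (by linarith), Or.inl (by linarith)⟩
  · have hcone : normG x < x.2.2 := lt_of_not_ge fun h => hx ⟨hfar, h⟩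
    exact ⟨Or.inr (by linarith), Or.inr (show normG (shift L x) < 2 * x.2.2 by linarith)⟩

lemma exists_maxHeat_fL_le_add_majorant :
    ∃ C > 0, ∀ L : ℝ, ∀ x : G, 0 < x.2.2 →
      maxHeat (fL L) x ≤ ENNReal.ofReal C *
        (ENNReal.ofReal (majorant x) + ENNReal.ofReal (majorant (shift L x))) := by
  obtain ⟨C, hC, hheat⟩ := exists_heatR0_le_majorant
  refine ⟨C, hC, fun L x hx => ?_⟩
  have hx' : 0 < (shift L x).2.2 := hx
  have hg := (majorant_pos hx).le
  have hg' := (majorant_pos hx').le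
  rw [← ENNReal.ofReal_add hg hg', ← ENNReal.ofReal_mul hC.le, mul_add]
  refine maxHeat_le fun t ht => ?_
  rw [convHeat_fL ht L hx, abs_le]
  have := hheat t ht x hx
  have := hheat t ht (shift L x) hx'
  have := heatR0_nonneg ht hx
  have := heatR0_nonneg ht hx'
  constructor <;> nlinarith

lemma setLIntegral_compl_farRegion_add_le {L : ℝ} (hL : 0 < L) {φ : G → ℝ≥0∞}
    (hφ : Measurable φ) :
    ∫⁻ x in (farRegion L)ᶜ, φ x + φ (shift L x) ∂ρG ≤
      2 * ∫⁻ x in nearRegion (5 * L), φ x ∂ρG := by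
  have hshift := measurePreserving_shift L
  calc ∫⁻ x in (farRegion L)ᶜ, φ x + φ (shift L x) ∂ρG
      = ∫⁻ x in (farRegion L)ᶜ, φ x ∂ρG + ∫⁻ x in (farRegion L)ᶜ, φ (shift L x) ∂ρG :=
        lintegral_add_left hφ _
    _ ≤ ∫⁻ x in nearRegion (5 * L), φ x ∂ρG +
          ∫⁻ x in shift L ⁻¹' nearRegion (5 * L), φ (shift L x) ∂ρG := by
        gcongr
        · exact fun x hx => (mem_nearRegion_of_notMem_farRegion hL hx).1
        · exact fun x hx => (mem_nearRegion_of_notMem_farRegion hL hx).2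
    _ = 2 * ∫⁻ x in nearRegion (5 * L), φ x ∂ρG := by
        rw [hshift.setLIntegral_comp_preimage (measurableSet_nearRegion _) hφ, two_mul]

lemma exists_lintegral_compl_farRegion_maxHeat_fL_le :
    ∃ C > 0, ∀ L > 0, ∫⁻ x in (farRegion L)ᶜ, maxHeat (fL L) x ∂ρG ≤
      ENNReal.ofReal (C * (1 + log (1 + log (1 + (5 * L) ^ 2)))) := by
  obtain ⟨C, hC, hmax⟩ := exists_maxHeat_fL_le_add_majorant
  refine ⟨C * (2 * (4 * π ^ 2 + 2 * π)), by positivity, fun L hL => ?_⟩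
  have hlog : 0 ≤ log (1 + (5 * L) ^ 2) := log_nonneg (by linarith [sq_nonneg (5 * L)])
  have hloglog : 0 ≤ log (1 + log (1 + (5 * L) ^ 2)) := log_nonneg (by linarith)
  have hg : Measurable fun x => ENNReal.ofReal (majorant x) := measurable_majorant.ennreal_ofReal
  calc ∫⁻ x in (farRegion L)ᶜ, maxHeat (fL L) x ∂ρG
      ≤ ∫⁻ x in (farRegion L)ᶜ, ENNReal.ofReal C *
          (ENNReal.ofReal (majorant x) + ENNReal.ofReal (majorant (shift L x))) ∂ρG :=
        lintegral_mono_ae (ae_restrict_of_ae (ae_pos_ρG.mono fun x hx => hmax L x hx))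
    _ ≤ ENNReal.ofReal C * (2 * ∫⁻ x in nearRegion (5 * L), ENNReal.ofReal (majorant x) ∂ρG) := by
        rw [lintegral_const_mul' _ _ ENNReal.ofReal_ne_top]
        gcongr
        exact setLIntegral_compl_farRegion_add_le hL hg
    _ ≤ ENNReal.ofReal C * (ENNReal.ofReal 2 *
          ENNReal.ofReal (4 * π ^ 2 + 2 * π * log (1 + log (1 + (5 * L) ^ 2)))) := by
        rw [ENNReal.ofReal_ofNat]
        gcongr
        exact setLIntegral_nearRegion_le (5 * L)
    _ ≤ _ := by
        rw [← ENNReal.ofReal_mul zero_le_two, ← ENNReal.ofReal_mul hC.le, mul_assoc C]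
        gcongr ENNReal.ofReal (C * ?_)
        nlinarith [pi_pos, mul_nonneg (sq_nonneg π) hloglog]

lemma three_le_log {L : ℝ} (hL : 36 ≤ L) : 3 ≤ log L := by
  rw [le_log_iff_exp_le (by linarith)]
  calc exp 3 = exp 1 ^ 3 := by rw [← exp_nat_mul]; norm_num
    _ ≤ 3 ^ 3 := by
      gcongr
      exact exp_one_lt_three.le
    _ ≤ L := by linarith

lemma one_le_log_log {L : ℝ} (hL : 36 ≤ L) : 1 ≤ log (log L) := one_le_log (three_le_log hL)

lemma log_one_add_log_one_add_sq_le {L : ℝ} (hL : 36 ≤ L) :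
    log (1 + log (1 + (5 * L) ^ 2)) ≤ 3 * log (log L) := by
  have hlog := three_le_log hL
  have hinner : log (1 + (5 * L) ^ 2) ≤ 4 * log L := by
    rw [show 4 * log L = log (L ^ 4) by simp]
    refine log_le_log (by positivity) ?_
    nlinarith [mul_le_mul hL hL (by norm_num) (by linarith), sq_nonneg L]
  rw [show 3 * log (log L) = log (log L ^ 3) by simp]
  refine log_le_log ?_ ?_
  · linarith [log_nonneg (show 1 ≤ 1 + (5 * L) ^ 2 by linarith [sq_nonneg (5 * L)])]
  · nlinarith [sq_nonneg (log L - 3)]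

theorem maxHeat_fL_upper :
    ∃ C > (0 : ℝ), ∀ L : ℝ, C < L →
      ∫⁻ x, maxHeat (fL L) x ∂ρG ≤ ENNReal.ofReal (C * Real.log (Real.log L)) := by
  obtain ⟨A, hA, hfar⟩ := exists_lintegral_farRegion_maxHeat_fL_le
  obtain ⟨B, hB, hnear⟩ := exists_lintegral_compl_farRegion_maxHeat_fL_le
  refine ⟨A + 4 * B + 36, by positivity, fun L hCL => ?_⟩
  have hL : 36 ≤ L := by linarith
  have hloglog := one_le_log_log hL
  have hlog := log_one_add_log_one_add_sq_le hL
  have hlog_nonneg : 0 ≤ log (1 + (5 * L) ^ 2) := log_nonneg (by linarith [sq_nonneg (5 * L)])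
  have hloglog_nonneg : 0 ≤ log (1 + log (1 + (5 * L) ^ 2)) := log_nonneg (by linarith)
  rw [← lintegral_add_compl _ (measurableSet_farRegion L)]
  refine (add_le_add (hfar L hL) (hnear L (by linarith))).trans ?_
  rw [← ENNReal.ofReal_add hA.le (by positivity)]
  refine ENNReal.ofReal_le_ofReal ?_
  calc A + B * (1 + log (1 + log (1 + (5 * L) ^ 2)))
      ≤ A * log (log L) + B * (log (log L) + 3 * log (log L)) := by
        gcongr
        exact le_mul_of_one_le_right hA.le hloglog
    _ ≤ (A + 4 * B + 36) * log (log L) := by linarith
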